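/- arXiv:2006.10418 — 4 statements merged into one kernel-verified Lean document; each statement's English description precedes it below -/
import Mathlib

section
/- Let K/F be cyclic Galois of degree n with Gal(K/F)=⟨σ⟩, R = K[t;σ], and f ∈ R monic of degree m with gcrd(f,t)=1 and deg_x ĥ = m for its minimal central left multiple ĥ. If N(f) = ĥ₁⋯ĥ_l in F[x] with each ĥ_i irreducible, then f admits a factorization f = f₁⋯f_l into irreducible f_i ∈ R with N(f_i) = ĥ_i (up to a unit scalar) and deg_t f_i = deg_x ĥ_i for every i. -/
open Polynomial

/-- The data of a skew polynomial ring with its coefficient map and norm matrix. -/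
structure SkewData (F K R : Type) [Field F] [Field K] [Algebra F K] [Ring R] (n : ℕ) where
  hn : 0 < n
  σ : K ≃ₐ[F] K
  ι : K →+* R
  t : R
  hmul : ∀ a : K, t * ι a = ι (σ a) * t
  coeff : R →+ (ℕ →₀ K)
  hcoeff : ∀ (a : K) (i : ℕ), coeff (ι a * t ^ i) = Finsupp.single i a
  hrepr : ∀ x : R, (coeff x).sum (fun i a => ι a * t ^ i) = x
  hσn : ∀ a : K, (σ ^ n) a = a
  hfix : ∀ a : K, σ a = a → ∃ b : F, algebraMap F K b = a
  ρ : R → Matrix (Fin n) (Fin n) (Polynomial K)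
  hρ : ∀ (g : R) (i : Fin n), t ^ (i : ℕ) * g =
      ∑ j : Fin n, ((ρ g i j).sum fun k a => ι a * t ^ (n * k)) * t ^ (j : ℕ)

namespace SkewData

variable {F K R : Type} [Field F] [Field K] [Algebra F K] [Ring R] {n : ℕ}
  (S : SkewData F K R n)

/-- degree -/
noncomputable def D (g : R) : ℕ := (S.coeff g).support.sup id

lemma coeff_inj {g h : R} (H : S.coeff g = S.coeff h) : g = h := by
  rw [← S.hrepr g, ← S.hrepr h, H]

lemma coeff_ne {g : R} (H : g ≠ 0) : S.coeff g ≠ 0 := by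
  intro h; apply H; apply S.coeff_inj; simpa using h

lemma tpow_mul (i : ℕ) (a : K) : S.t ^ i * S.ι a = S.ι ((S.σ ^ i) a) * S.t ^ i := by
  induction i with
  | zero => simp
  | succ i ih =>
    rw [pow_succ', mul_assoc, ih, ← mul_assoc, S.hmul, pow_succ' S.σ, mul_assoc]
    rfl

lemma coeff_mul (g h : R) (k : ℕ) : S.coeff (g * h) k =
    ∑ i ∈ (S.coeff g).support, ∑ j ∈ (S.coeff h).support,
      if i + j = k then S.coeff g i * (S.σ ^ i) (S.coeff h j) else 0 := by
  have e : g * h = ∑ i ∈ (S.coeff g).support, ∑ j ∈ (S.coeff h).support,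
      S.ι (S.coeff g i * (S.σ ^ i) (S.coeff h j)) * S.t ^ (i + j) := by
    conv_lhs => rw [← S.hrepr g, ← S.hrepr h]
    rw [Finsupp.sum, Finsupp.sum, Finset.sum_mul_sum]
    refine Finset.sum_congr rfl fun i _ => Finset.sum_congr rfl fun j _ => ?_
    rw [mul_assoc, ← mul_assoc (S.t ^ i), S.tpow_mul, map_mul, pow_add]
    simp only [mul_assoc]
  rw [e]
  simp only [map_sum, S.hcoeff, Finsupp.finsetSum_apply, Finsupp.single_apply]

lemma coeff_gt {g : R} {k : ℕ} (h : S.D g < k) : S.coeff g k = 0 := by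
  by_contra H
  have := Finset.le_sup (f := id) (Finsupp.mem_support_iff.2 H)
  simp only [id] at this
  exact absurd h (not_lt.2 this)

lemma D_le {g : R} {r : ℕ} (h : ∀ k, r < k → S.coeff g k = 0) : S.D g ≤ r := by
  refine Finset.sup_le fun k hk => ?_
  by_contra H
  exact Finsupp.mem_support_iff.1 hk (h k (not_le.1 H))

lemma le_D {g : R} {k : ℕ} (h : S.coeff g k ≠ 0) : k ≤ S.D g := by
  by_contra H
  exact h (S.coeff_gt (not_le.1 H))

lemma lc_ne {g : R} (h : g ≠ 0) : S.coeff g (S.D g) ≠ 0 := by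
  have := Finset.exists_mem_eq_sup (S.coeff g).support
    (Finsupp.support_nonempty_iff.2 (S.coeff_ne h)) id
  obtain ⟨i, hi, h2⟩ := this
  rw [D, h2]
  exact Finsupp.mem_support_iff.1 hi

lemma D_eq {g : R} {r : ℕ} (h : ∀ k, r < k → S.coeff g k = 0) (h' : S.coeff g r ≠ 0) :
    S.D g = r := le_antisymm (S.D_le h) (S.le_D h')

lemma lc_mul (g h : R) : S.coeff (g * h) (S.D g + S.D h) =
    S.coeff g (S.D g) * (S.σ ^ S.D g) (S.coeff h (S.D h)) := by
  rw [coeff_mul, Finset.sum_eq_single (S.D g), Finset.sum_eq_single (S.D h)]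
  · simp
  · intro j hj hne; rw [if_neg]; omega
  · intro hj
    have : S.coeff h (S.D h) = 0 := by simpa using hj
    simp [this]
  · intro i hi hne
    refine Finset.sum_eq_zero fun j hj => ?_
    rw [if_neg]
    have h1 := S.le_D (Finsupp.mem_support_iff.1 hi)
    have h2 := S.le_D (Finsupp.mem_support_iff.1 hj)
    omega
  · intro hj
    have : S.coeff g (S.D g) = 0 := by simpa using hj
    simp [this]

lemma coeff_mul_gt (g h : R) {k : ℕ} (hk : S.D g + S.D h < k) : S.coeff (g * h) k = 0 := by
  rw [coeff_mul]
  refine Finset.sum_eq_zero fun i hi => Finset.sum_eq_zero fun j hj => ?_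
  rw [if_neg]
  have h1 := S.le_D (Finsupp.mem_support_iff.1 hi)
  have h2 := S.le_D (Finsupp.mem_support_iff.1 hj)
  omega

lemma lc_mul_ne {g h : R} (hg : g ≠ 0) (hh : h ≠ 0) : S.coeff (g * h) (S.D g + S.D h) ≠ 0 := by
  rw [lc_mul]
  refine mul_ne_zero (S.lc_ne hg) ?_
  exact (map_ne_zero_iff _ (S.σ ^ S.D g).injective).2 (S.lc_ne hh)

lemma mul_ne (S : SkewData F K R n) {g h : R} (hg : g ≠ 0) (hh : h ≠ 0) : g * h ≠ 0 := by
  intro H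
  apply S.lc_mul_ne hg hh
  simp [H]

lemma D_mul {g h : R} (hg : g ≠ 0) (hh : h ≠ 0) : S.D (g * h) = S.D g + S.D h :=
  S.D_eq (fun _ hk => S.coeff_mul_gt g h hk) (S.lc_mul_ne hg hh)

lemma D_mono {a : K} (ha : a ≠ 0) (i : ℕ) : S.D (S.ι a * S.t ^ i) = i := by
  apply S.D_eq
  · intro k hk; rw [S.hcoeff, Finsupp.single_apply, if_neg]; omega
  · simp [S.hcoeff, ha]

lemma ι_ne {a : K} (ha : a ≠ 0) (i : ℕ) : S.ι a * S.t ^ i ≠ 0 := by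
  intro H
  have := S.hcoeff a i
  rw [H] at this
  have := DFunLike.congr_fun this i
  simp at this
  exact ha this.symm

lemma one_ne (S : SkewData F K R n) : (1 : R) ≠ 0 := by simpa using S.ι_ne (one_ne_zero (α := K)) 0

lemma t_ne : S.t ≠ 0 := by simpa using S.ι_ne (one_ne_zero (α := K)) 1

lemma D_one : S.D 1 = 0 := by simpa using S.D_mono (one_ne_zero (α := K)) 0

lemma eq_ι {g : R} (h : S.D g = 0) : g = S.ι (S.coeff g 0) := by
  apply S.coeff_inj
  have : S.coeff (S.ι (S.coeff g 0)) = Finsupp.single 0 (S.coeff g 0) := by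
    simpa using S.hcoeff (S.coeff g 0) 0
  rw [this]
  ext k
  rcases Nat.eq_zero_or_pos k with rfl | hk
  · simp
  · rw [S.coeff_gt (h ▸ hk), Finsupp.single_apply, if_neg (by omega)]

lemma isUnit_of {g : R} (hg : g ≠ 0) (h : S.D g = 0) : IsUnit g := by
  have e := S.eq_ι h
  have : S.coeff g 0 ≠ 0 := h ▸ S.lc_ne hg
  rw [e]
  exact (IsUnit.mk0 _ this).map S.ι

lemma D_of_mul_one {u g : R} (h : u * g = 1) : S.D g = 0 := by
  have hu : u ≠ 0 := by rintro rfl; exact S.one_ne (by simpa using h.symm)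
  have hg : g ≠ 0 := by rintro rfl; exact S.one_ne (by simpa using h.symm)
  have := S.D_mul hu hg
  rw [h, S.D_one] at this
  omega

lemma principal (S : SkewData F K R n) (J : Ideal R) (hJ : J ≠ ⊥) :
    ∃ d, d ≠ 0 ∧ d ∈ J ∧ ∀ y ∈ J, ∃ q, y = q * d := by
  obtain ⟨y0, hy0, hy0'⟩ := Submodule.exists_mem_ne_zero_of_ne_bot hJ
  classical
  have hex : ∃ r, ∃ d ∈ J, d ≠ 0 ∧ S.D d = r := ⟨_, y0, hy0, hy0', rfl⟩
  obtain ⟨d, hdJ, hd, hdr⟩ := Nat.find_spec hex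
  refine ⟨d, hd, hdJ, ?_⟩
  have hmin : ∀ y ∈ J, y ≠ 0 → S.D d ≤ S.D y := by
    intro y hy hy'
    rw [hdr]
    exact Nat.find_min' hex ⟨y, hy, hy', rfl⟩
  have key : ∀ r, ∀ y ∈ J, S.D y = r → ∃ q, y = q * d := by
    intro r
    induction r using Nat.strong_induction_on with
    | _ r ih =>
      intro y hy hyr
      by_cases h0 : y = 0
      · exact ⟨0, by simp [h0]⟩
      have hle := hmin y hy h0
      obtain ⟨k, hk⟩ := Nat.exists_eq_add_of_le hle
      have hl : (S.σ ^ k) (S.coeff d (S.D d)) ≠ 0 :=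
        (map_ne_zero_iff _ (S.σ ^ k).injective).2 (S.lc_ne hd)
      set c := S.coeff y (S.D y) / (S.σ ^ k) (S.coeff d (S.D d)) with hc
      have hc0 : c ≠ 0 := div_ne_zero (S.lc_ne h0) hl
      set s := S.ι c * S.t ^ k with hs
      have hsD : S.D s = k := S.D_mono hc0 k
      have hlead : S.coeff (s * d) (S.D y) = S.coeff y (S.D y) := by
        have := S.lc_mul s d
        rw [hsD] at this
        rw [hk, add_comm, this, hs, S.hcoeff, Finsupp.single_eq_same, hc, div_mul_cancel₀ _ hl, hk,
          add_comm]
      have hz : y - s * d ∈ J := J.sub_mem hy (J.mul_mem_left s hdJ)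
      have : ∃ q, y - s * d = q * d := by
        by_cases hz0 : y - s * d = 0
        · exact ⟨0, by simp [hz0]⟩
        refine ih (S.D (y - s * d)) ?_ _ hz rfl
        rw [← hyr]
        have hle2 : S.D (y - s * d) ≤ S.D y := S.D_le fun j hj => by
          rw [map_sub, Finsupp.sub_apply, S.coeff_gt hj, S.coeff_mul_gt, sub_zero]
          omega
        refine lt_of_le_of_ne hle2 fun he => S.lc_ne hz0 ?_
        rw [he, map_sub, Finsupp.sub_apply, hlead, sub_self]
      obtain ⟨q, hq⟩ := this
      exact ⟨q + s, by rw [add_mul, ← hq]; abel⟩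
  exact fun y hy => key _ y hy rfl

lemma comm_x (a : K) : Commute (S.ι a) (S.t ^ n) := by
  show _ = _
  rw [S.tpow_mul, S.hσn]

/-- The embedding of `K[x]`. -/
noncomputable def φ : K[X] →+* R := Polynomial.eval₂RingHom' S.ι (S.t ^ n) S.comm_x

lemma φ_eq (p : K[X]) : S.φ p = p.sum fun k a => S.ι a * S.t ^ (n * k) := by
  simp only [φ, eval₂RingHom', RingHom.coe_mk, MonoidHom.coe_mk, OneHom.coe_mk, eval₂_eq_sum,
    pow_mul]

lemma φ_C (a : K) : S.φ (C a) = S.ι a := by simp [φ, eval₂RingHom']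

lemma φ_X : S.φ X = S.t ^ n := by simp [φ, eval₂RingHom']

lemma coeff_φ (p : K[X]) (j k j' : ℕ) (hj : j < n) (hj' : j' < n) :
    S.coeff (S.φ p * S.t ^ j) (n * k + j') = if j = j' then p.coeff k else 0 := by
  have e : S.φ p * S.t ^ j = ∑ i ∈ p.support, S.ι (p.coeff i) * S.t ^ (n * i + j) := by
    rw [φ_eq, Polynomial.sum, Finset.sum_mul]
    simp only [mul_assoc, pow_add]
  rw [e]
  simp only [map_sum, S.hcoeff, Finsupp.finsetSum_apply, Finsupp.single_apply]
  have hiff : ∀ i, n * i + j = n * k + j' ↔ (i = k ∧ j = j') := by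
    intro i
    constructor
    · intro h
      have h1 := congrArg (· % n) h
      simp only [Nat.mul_add_mod, Nat.mod_eq_of_lt hj, Nat.mod_eq_of_lt hj'] at h1
      subst h1
      exact ⟨Nat.eq_of_mul_eq_mul_left S.hn (by omega), rfl⟩
    · rintro ⟨rfl, rfl⟩; rfl
  simp only [hiff]
  by_cases hjj : j = j'
  · simp only [hjj, and_true, if_true]
    rw [Finset.sum_ite_eq']
    simp +contextual [eq_comm]
  · simp [hjj]

lemma coeff_sum (v : Fin n → K[X]) (k : ℕ) (j : Fin n) :
    S.coeff (∑ i, S.φ (v i) * S.t ^ (i : ℕ)) (n * k + j) = (v j).coeff k := by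
  rw [map_sum, Finsupp.finsetSum_apply]
  simp only [S.coeff_φ _ _ _ _ (Fin.is_lt _) j.2, Fin.val_inj]
  simp

lemma sum_inj {v w : Fin n → K[X]}
    (h : ∑ i, S.φ (v i) * S.t ^ (i : ℕ) = ∑ i, S.φ (w i) * S.t ^ (i : ℕ)) : v = w := by
  funext j; ext k
  rw [← S.coeff_sum v, ← S.coeff_sum w, h]

lemma φ_inj {p q : K[X]} (h : S.φ p = S.φ q) : p = q := by
  ext k
  have h1 := S.coeff_φ p 0 k 0 S.hn S.hn
  have h2 := S.coeff_φ q 0 k 0 S.hn S.hn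
  simp only [pow_zero, mul_one, add_zero, if_true] at h1 h2
  rw [← h1, ← h2, h]

lemma φ_ne {p : K[X]} (h : p ≠ 0) : S.φ p ≠ 0 := by
  intro H; exact h (S.φ_inj (by simpa using H))

lemma D_φ (p : K[X]) (hp : p ≠ 0) : S.D (S.φ p) = n * p.natDegree := by
  apply S.D_eq
  · intro k hk
    have h1 := S.coeff_φ p 0 (k / n) (k % n) S.hn (Nat.mod_lt _ S.hn)
    rw [Nat.div_add_mod, pow_zero, mul_one] at h1
    rw [h1]
    split_ifs with h0
    · apply coeff_eq_zero_of_natDegree_lt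
      have := Nat.div_add_mod k n
      rw [← h0, add_zero] at this
      rw [← this] at hk
      exact Nat.lt_of_mul_lt_mul_left hk
    · rfl
  · have h1 := S.coeff_φ p 0 p.natDegree 0 S.hn S.hn
    simp only [pow_zero, mul_one, add_zero, if_true] at h1
    rw [h1]
    simpa using hp

lemma hρ' (g : R) (i : Fin n) :
    S.t ^ (i : ℕ) * g = ∑ j : Fin n, S.φ (S.ρ g i j) * S.t ^ (j : ℕ) := by
  rw [S.hρ]; simp only [φ_eq]

lemma ρ_unique (g : R) (A : Matrix (Fin n) (Fin n) K[X])
    (h : ∀ i : Fin n, S.t ^ (i : ℕ) * g = ∑ j : Fin n, S.φ (A i j) * S.t ^ (j : ℕ)) :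
    S.ρ g = A := by
  funext i
  apply S.sum_inj
  rw [← S.hρ', h]

lemma vec_mul (g : R) (v : Fin n → K[X]) :
    (∑ i, S.φ (v i) * S.t ^ (i : ℕ)) * g =
      ∑ j, S.φ (Matrix.vecMul v (S.ρ g) j) * S.t ^ (j : ℕ) := by
  rw [Finset.sum_mul]
  simp only [mul_assoc, S.hρ', Matrix.vecMul, dotProduct, map_sum, Finset.sum_mul, Finset.mul_sum,
    map_mul]
  rw [Finset.sum_comm]

lemma ρ_mul (g h : R) : S.ρ (g * h) = S.ρ g * S.ρ h := by
  apply S.ρ_unique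
  intro i
  rw [← mul_assoc, S.hρ', S.vec_mul]
  rfl

/-- norm -/
noncomputable def N (g : R) : K[X] := (S.ρ g).det

lemma N_mul (g h : R) : S.N (g * h) = S.N g * S.N h := by
  simp [N, ρ_mul, Matrix.det_mul]

lemma N_ne {g : R} (hg : g ≠ 0) : S.N g ≠ 0 := by
  intro H
  obtain ⟨v, hv, hv0⟩ := Matrix.exists_vecMul_eq_zero_iff.2 H
  have := S.vec_mul g v
  rw [hv0] at this
  simp only [Pi.zero_apply, map_zero, zero_mul, Finset.sum_const_zero] at this
  refine S.mul_ne ?_ hg this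
  intro h0
  apply hv
  apply S.sum_inj
  simpa using h0

lemma N_left (g : R) : ∃ u, S.φ (S.N g) = u * g := by
  have : NeZero n := ⟨S.hn.ne'⟩
  refine ⟨∑ i, S.φ ((S.ρ g).adjugate 0 i) * S.t ^ (i : ℕ), ?_⟩
  rw [S.vec_mul]
  have : ∀ j, Matrix.vecMul ((S.ρ g).adjugate 0) (S.ρ g) j
      = if j = 0 then S.N g else 0 := by
    intro j
    have h := congrFun (congrFun (Matrix.adjugate_mul (S.ρ g)) 0) j
    rw [Matrix.smul_apply, Matrix.one_apply] at h
    rw [show Matrix.vecMul ((S.ρ g).adjugate 0) (S.ρ g) j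
      = ((S.ρ g).adjugate * S.ρ g) 0 j from rfl, h]
    simp [N, eq_comm]
  simp only [this]
  rw [Finset.sum_eq_single 0]
  · simp
  · intro b _ hb; simp [hb]
  · simp

lemma N_deg_le {g : R} (hg : g ≠ 0) : (S.N g).natDegree ≤ S.D g := by
  rw [N, Matrix.det_apply]
  apply natDegree_sum_le_of_forall_le
  intro π _
  refine (natDegree_smul_le _ _).trans ?_
  by_cases h0 : ∀ i, S.ρ g (π i) i ≠ 0
  · refine (natDegree_prod_le _ _).trans ?_
    have key : ∀ i : Fin n, n * (S.ρ g (π i) i).natDegree + i ≤ (π i : ℕ) + S.D g := by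
      intro i
      have h1 := S.coeff_sum (S.ρ g (π i)) (S.ρ g (π i) i).natDegree i
      rw [← S.hρ'] at h1
      have h2 : S.D (S.t ^ (π i : ℕ) * g) = (π i : ℕ) + S.D g := by
        have := S.D_mul (by simpa using S.ι_ne (one_ne_zero (α := K)) (π i : ℕ)) hg
        rw [this]
        congr 1
        simpa using S.D_mono (one_ne_zero (α := K)) (π i : ℕ)
      rw [← h2]
      apply S.le_D
      rw [h1]
      simpa using h0 i
    have hsum := Finset.sum_le_sum fun i (_ : i ∈ Finset.univ) => key i
    rw [Finset.sum_add_distrib, Finset.sum_add_distrib, ← Finset.mul_sum,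
      Equiv.sum_comp π (fun i : Fin n => (i : ℕ))] at hsum
    simp only [Finset.sum_const, Finset.card_univ, Fintype.card_fin, smul_eq_mul] at hsum
    refine Nat.le_of_mul_le_mul_left ?_ S.hn
    omega
  · push Not at h0
    obtain ⟨i, hi⟩ := h0
    rw [Finset.prod_eq_zero (f := fun i => S.ρ g (π i) i) (Finset.mem_univ i) hi]
    simp

lemma t_φ (p : K[X]) : S.t * S.φ p = S.φ (p.map (S.σ : K →+* K)) * S.t := by
  induction p using Polynomial.induction_on' with
  | add p q hp hq => simp only [map_add, Polynomial.map_add, mul_add, add_mul, hp, hq]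
  | monomial k a =>
    simp only [← C_mul_X_pow_eq_monomial, map_mul, map_pow, φ_C, φ_X, Polynomial.map_mul, map_C,
      Polynomial.map_pow, map_X]
    rw [← mul_assoc, S.hmul, mul_assoc, mul_assoc, ← pow_mul, ← pow_succ, ← pow_succ']
    rfl

lemma N_mem (g : R) : ∃ G : F[X], G.map (algebraMap F K) = S.N g := by
  obtain ⟨g', hg'⟩ : ∃ g', S.t * g = g' * S.t := by
    refine ⟨(S.coeff g).sum fun i a => S.ι (S.σ a) * S.t ^ i, ?_⟩
    conv_lhs => rw [← S.hrepr g]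
    rw [Finsupp.sum, Finsupp.sum, Finset.mul_sum, Finset.sum_mul]
    refine Finset.sum_congr rfl fun i _ => ?_
    rw [← mul_assoc, S.hmul, mul_assoc, mul_assoc, ← pow_succ, ← pow_succ']
  have hρg : S.ρ g' = (S.ρ g).map (Polynomial.mapRingHom (S.σ : K →+* K)) := by
    apply S.ρ_unique
    intro i
    have : (S.t ^ (i : ℕ) * g' -
      ∑ j : Fin n, S.φ ((S.ρ g i j).map (S.σ : K →+* K)) * S.t ^ (j : ℕ)) * S.t = 0 := by
      rw [sub_mul, mul_assoc, ← hg', ← mul_assoc, ← pow_succ, pow_succ', mul_assoc, S.hρ',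
        Finset.mul_sum, Finset.sum_mul, sub_eq_zero]
      refine Finset.sum_congr rfl fun j _ => ?_
      rw [← mul_assoc, t_φ, mul_assoc, mul_assoc, ← pow_succ, ← pow_succ']
    by_contra H
    exact S.mul_ne (sub_ne_zero.2 H) S.t_ne this
  have h1 : S.N g' = (S.N g).map (S.σ : K →+* K) := by
    rw [N, N, hρg]
    exact (RingHom.map_det (Polynomial.mapRingHom (S.σ : K →+* K)) (S.ρ g)).symm
  have h2 : S.N g' = S.N g := by
    have := congrArg S.N hg'
    rw [N_mul, N_mul, mul_comm] at this
    exact (mul_right_cancel₀ (S.N_ne S.t_ne) this).symm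
  have : S.N g ∈ Polynomial.lifts (algebraMap F K) := by
    rw [Polynomial.lifts_iff_coeff_lifts]
    intro k
    obtain ⟨b, hb⟩ := S.hfix ((S.N g).coeff k) (by
      have := congrArg (fun p => p.coeff k) (h1.symm.trans h2)
      simpa using this)
    exact ⟨b, hb⟩
  exact (Polynomial.mem_lifts _).1 this

/-- The embedding of `F[x]`. -/
noncomputable def ψ (p : F[X]) : R := S.φ (p.map (algebraMap F K))

lemma ψ_t (p : F[X]) : S.t * S.ψ p = S.ψ p * S.t := by
  rw [ψ, t_φ, Polynomial.map_map]
  congr 3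
  ext a
  simp

lemma ψ_ι (p : F[X]) (a : K) : S.ι a * S.ψ p = S.ψ p * S.ι a := by
  rw [ψ, ← φ_C, ← map_mul, mul_comm, map_mul]

lemma ψ_comm (p : F[X]) (g : R) : g * S.ψ p = S.ψ p * g := by
  have ht : Commute S.t (S.ψ p) := S.ψ_t p
  have h2 : ∀ a, Commute (S.ι a) (S.ψ p) := S.ψ_ι p
  rw [← S.hrepr g]
  exact Finset.sum_induction _ (fun z => Commute z (S.ψ p)) (fun _ _ => Commute.add_left)
    (Commute.zero_left _) (fun i _ => (h2 _).mul_left (ht.pow_left i))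

lemma ψ_mul (p q : F[X]) : S.ψ (p * q) = S.ψ p * S.ψ q := by simp [ψ]

lemma ψ_add (p q : F[X]) : S.ψ (p + q) = S.ψ p + S.ψ q := by simp [ψ]

lemma ψ_one : S.ψ 1 = 1 := by simp [ψ]

lemma ψ_ne {p : F[X]} (hp : p ≠ 0) : S.ψ p ≠ 0 :=
  S.φ_ne ((Polynomial.map_ne_zero_iff (algebraMap F K).injective).2 hp)

lemma D_ψ {p : F[X]} (hp : p ≠ 0) : S.D (S.ψ p) = n * p.natDegree := by
  rw [ψ, D_φ, natDegree_map]
  exact (Polynomial.map_ne_zero_iff (algebraMap F K).injective).2 hp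

lemma N_ψ (p : F[X]) : S.N (S.ψ p) = (p.map (algebraMap F K)) ^ n := by
  have : S.ρ (S.ψ p) = Matrix.scalar (Fin n) (p.map (algebraMap F K)) := by
    apply S.ρ_unique
    intro i
    rw [ψ_comm, Finset.sum_eq_single i]
    · simp [ψ]
    · intro b _ hb; simp [Matrix.diagonal_apply_ne' _ hb]
    · simp
  rw [N, this]
  simp

lemma N_deg {g : R} (hg : g ≠ 0) : (S.N g).natDegree = S.D g := by
  obtain ⟨G, hG⟩ := S.N_mem g
  obtain ⟨u, hu⟩ := S.N_left g
  have hG0 : G ≠ 0 := by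
    rintro rfl
    exact S.N_ne hg (by simpa using hG.symm)
  have hψ : S.ψ G = u * g := by rw [ψ, hG, hu]
  have hu0 : u ≠ 0 := by
    rintro rfl
    exact S.ψ_ne hG0 (by simpa using hψ)
  have h1 := S.D_ψ hG0
  rw [hψ, S.D_mul hu0 hg] at h1
  have h2 := S.N_ψ G
  rw [hψ, N_mul] at h2
  have h3 := congrArg natDegree h2
  rw [natDegree_mul (S.N_ne hu0) (S.N_ne hg), natDegree_pow, natDegree_map] at h3
  have := S.N_deg_le hu0
  have := S.N_deg_le hg
  omega

/-- `N d` is `h` up to a scalar. -/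
def Q (d : R) (h : F[X]) : Prop := ∃ c : K, c ≠ 0 ∧ S.N d = C c * h.map (algebraMap F K)

lemma Q_ne {d : R} {h : F[X]} (hh : h ≠ 0) (hQ : S.Q d h) : d ≠ 0 := by
  rintro rfl
  obtain ⟨c, hc, hQ⟩ := hQ
  have h0 : S.N 0 = 0 := by
    have := S.N_ψ 0
    simpa [ψ, S.hn.ne'] using this
  rw [h0] at hQ
  exact mul_ne_zero (C_ne_zero.2 hc)
    ((Polynomial.map_ne_zero_iff (algebraMap F K).injective).2 hh) hQ.symm

lemma Q_deg {d : R} {h : F[X]} (hh : h ≠ 0) (hQ : S.Q d h) : S.D d = h.natDegree := by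
  rw [← S.N_deg (S.Q_ne hh hQ)]
  obtain ⟨c, hc, hQ⟩ := hQ
  rw [hQ, natDegree_C_mul hc, natDegree_map]

lemma Q_irr {d : R} {h : F[X]} (hh : Irreducible h) (hQ : S.Q d h) : Irreducible d := by
  have hd := S.Q_ne hh.ne_zero hQ
  have hD := S.Q_deg hh.ne_zero hQ
  have hpos := hh.natDegree_pos
  refine ⟨fun hu => ?_, fun a b hab => ?_⟩
  · obtain ⟨v, hv⟩ := hu.exists_left_inv
    have := S.D_of_mul_one hv
    omega
  · have ha : a ≠ 0 := by rintro rfl; exact hd (by simpa using hab)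
    have hb : b ≠ 0 := by rintro rfl; exact hd (by simpa using hab)
    obtain ⟨A, hA⟩ := S.N_mem a
    obtain ⟨B, hB⟩ := S.N_mem b
    obtain ⟨c, hc, hQ⟩ := hQ
    have hDd := S.D_mul ha hb
    rw [← hab] at hDd
    have hdA : A.natDegree = S.D a := by rw [← S.N_deg ha, ← hA, natDegree_map]
    have hdB : B.natDegree = S.D b := by rw [← S.N_deg hb, ← hB, natDegree_map]
    have hA0 : A ≠ 0 := by rintro rfl; exact S.N_ne ha (by simpa using hA.symm)
    have hB0 : B ≠ 0 := by rintro rfl; exact S.N_ne hb (by simpa using hB.symm)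
    have hdvd : h ∣ A * B := by
      rw [← Polynomial.map_dvd_map' (algebraMap F K), Polynomial.map_mul, hA, hB, ← N_mul, ← hab,
        hQ]
      exact dvd_mul_left _ _
    rcases hh.prime.dvd_or_dvd hdvd with h1 | h1
    · have := natDegree_le_of_dvd h1 hA0
      exact Or.inr (S.isUnit_of hb (by omega))
    · have := natDegree_le_of_dvd h1 hB0
      exact Or.inl (S.isUnit_of ha (by omega))

/-- Minimality of the bound. -/
def P (f : R) : Prop := ∀ p : F[X], p ≠ 0 → (∃ u, S.ψ p = u * f) → S.D f ≤ p.natDegree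

lemma step {f : R} {q h : F[X]} (hq : q ≠ 0) (hh : Irreducible h) (hP : S.P f)
    (hQ : S.Q f (q * h)) : ∃ g d, f = g * d ∧ S.P g ∧ S.Q g q ∧ S.Q d h := by
  have hqh := mul_ne_zero hq hh.ne_zero
  have hf := S.Q_ne hqh hQ
  have hDf := S.Q_deg hqh hQ
  rw [natDegree_mul hq hh.ne_zero] at hDf
  have hpos := hh.natDegree_pos
  obtain ⟨c, hc, hN⟩ := hQ
  obtain ⟨d, hd, hdJ, hdiv⟩ := S.principal (Ideal.span {S.ψ h, f}) (by
    intro H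
    have : f ∈ Ideal.span {S.ψ h, f} := Ideal.subset_span (by simp)
    rw [H] at this
    exact hf (by simpa using this))
  obtain ⟨g, hg⟩ := hdiv f (Ideal.subset_span (by simp))
  obtain ⟨v, hv⟩ := hdiv (S.ψ h) (Ideal.subset_span (by simp))
  obtain ⟨a, b, hab⟩ := Submodule.mem_span_pair.1 hdJ
  simp only [smul_eq_mul] at hab
  -- `f` right-divides `q h`
  obtain ⟨u, hu⟩ : ∃ u, S.ψ (q * h) = u * f := by
    obtain ⟨u, hu⟩ := S.N_left f
    refine ⟨S.ι c⁻¹ * u, ?_⟩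
    rw [mul_assoc, ← hu, hN, map_mul, φ_C, ← mul_assoc, ← map_mul, inv_mul_cancel₀ hc, map_one,
      one_mul, ψ]
  have hD0 : S.D d ≠ 0 := by
    intro h0
    obtain ⟨w, hw⟩ := (S.isUnit_of hd h0).exists_left_inv
    have : S.ψ q = (w * a * u + w * b * S.ψ q) * f := by
      calc S.ψ q = w * d * S.ψ q := by rw [hw, one_mul]
        _ = w * (a * S.ψ h + b * f) * S.ψ q := by rw [hab]
        _ = w * a * (S.ψ (q * h)) + w * b * (f * S.ψ q) := by
          rw [mul_comm q h, ψ_mul]; noncomm_ring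
        _ = _ := by rw [hu, S.ψ_comm q f]; noncomm_ring
    have := hP q hq ⟨_, this⟩
    omega
  have hg0 : g ≠ 0 := by rintro rfl; exact hf (by simpa using hg)
  have hDD := S.D_mul hg0 hd
  rw [← hg] at hDD
  have hlift : ∀ p : F[X], p ≠ 0 → (∃ u, S.ψ p = u * g) → S.D f ≤ p.natDegree + h.natDegree := by
    rintro p hp ⟨u', hu'⟩
    rw [← natDegree_mul hp hh.ne_zero]
    refine hP _ (mul_ne_zero hp hh.ne_zero) ⟨v * u', ?_⟩
    calc S.ψ (p * h) = S.ψ p * (v * d) := by rw [ψ_mul, hv]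
      _ = v * S.ψ p * d := by rw [← mul_assoc, ← S.ψ_comm]
      _ = v * u' * f := by rw [hu', hg]; noncomm_ring
  obtain ⟨G, hG⟩ := S.N_mem g
  obtain ⟨E, hE⟩ := S.N_mem d
  have hG0 : G ≠ 0 := by rintro rfl; exact S.N_ne hg0 (by simpa using hG.symm)
  have hE0 : E ≠ 0 := by rintro rfl; exact S.N_ne hd (by simpa using hE.symm)
  have hdG : G.natDegree = S.D g := by rw [← S.N_deg hg0, ← hG, natDegree_map]
  have hdE : E.natDegree = S.D d := by rw [← S.N_deg hd, ← hE, natDegree_map]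
  have hle : E.natDegree ≤ h.natDegree := by
    have := hlift G hG0 (by rw [ψ, hG]; exact S.N_left g)
    omega
  have hdvd : h ∣ E := by
    by_contra hnd
    obtain ⟨a', b', h1⟩ := (hh.coprime_iff_not_dvd).2 hnd
    obtain ⟨w, hw⟩ := S.N_left d
    rw [← hE] at hw
    apply hD0
    apply S.D_of_mul_one (u := S.ψ a' * v + S.ψ b' * w)
    rw [← S.ψ_one, ← h1, ψ_add, ψ_mul, ψ_mul, hv, ψ, ψ, ψ, hw]
    noncomm_ring
  obtain ⟨e, he⟩ := hdvd
  have he0 : e ≠ 0 := by rintro rfl; exact hE0 (by simpa using he)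
  have hed : e.natDegree = 0 := by
    rw [he, natDegree_mul hh.ne_zero he0] at hle
    omega
  obtain ⟨e', rfl⟩ := natDegree_eq_zero.1 hed
  have he' : algebraMap F K e' ≠ 0 := by
    simpa using he0
  have hQd : S.N d = C (algebraMap F K e') * h.map (algebraMap F K) := by
    rw [← hE, he, Polynomial.map_mul, map_C, mul_comm]
  have hEh : E.natDegree = h.natDegree := by
    rw [he, natDegree_mul hh.ne_zero he0, hed, add_zero]
  have hmh : h.map (algebraMap F K) ≠ 0 :=
    (Polynomial.map_ne_zero_iff (algebraMap F K).injective).2 hh.ne_zero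
  refine ⟨g, d, hg, ?_, ⟨c / algebraMap F K e', div_ne_zero hc he', ?_⟩, ⟨_, he', hQd⟩⟩
  · intro p hp hpu
    have := hlift p hp hpu
    omega
  · have h1 : S.N g * S.N d = C c * ((q * h).map (algebraMap F K)) := by rw [← N_mul, ← hg, hN]
    apply mul_right_cancel₀ (S.N_ne hd)
    rw [h1, hQd, Polynomial.map_mul]
    have : C c = C (c / algebraMap F K e') * C (algebraMap F K e') := by
      rw [← C_mul, div_mul_cancel₀ _ he']
    rw [this]
    ring

lemma main (l : ℕ) : ∀ (f : R) (hs : Fin l → F[X]), (l = 0 → f = 1) → S.P f →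
    (∀ i, Irreducible (hs i)) → S.Q f (List.ofFn hs).prod →
    ∃ fs : Fin l → R, f = (List.ofFn fs).prod ∧ ∀ i, S.Q (fs i) (hs i) := by
  induction l with
  | zero =>
    intro f hs h0 _ _ _
    exact ⟨fun _ => 1, by simp [h0], fun i => i.elim0⟩
  | succ l ih =>
    intro f hs _ hP hirr hQ
    rcases Nat.eq_zero_or_pos l with rfl | hl
    · refine ⟨fun _ => f, by simp, fun i => ?_⟩
      have : i = 0 := Fin.ext (by simp)
      subst this
      simpa using hQ
    · rw [List.ofFn_succ', List.concat_eq_append, List.prod_append, List.prod_singleton] at hQ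
      obtain ⟨g, d, hfg, hPg, hQg, hQd⟩ := S.step (by
        rw [Ne, List.prod_eq_zero_iff, List.mem_ofFn]
        rintro ⟨i, hi⟩
        exact (hirr _).ne_zero hi) (hirr _) hP hQ
      obtain ⟨fs, hfs, hfs'⟩ := ih g (fun i => hs i.castSucc) (by omega) hPg
        (fun i => hirr _) hQg
      refine ⟨Fin.snoc fs d, ?_, fun i => ?_⟩
      · rw [List.ofFn_succ', List.concat_eq_append, List.prod_append, List.prod_singleton]
        simp [← hfs, hfg]
      · refine Fin.lastCases ?_ (fun i => ?_) i
        · simpa using hQd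
        · simpa using hfs' i

end SkewData

/-- If `f ∈ R = K[t;σ]` is monic of degree `m` with `gcrd(f,t)=1` and
`deg ĥ = m`, and `N(f) = ĥ₁⋯ĥ_l` with each `ĥ_i ∈ F[x]` irreducible, then
`f = f₁⋯f_l` into irreducibles with `N(f_i) = ĥ_i` up to a unit scalar and
`deg f_i = deg ĥ_i`. -/
theorem norm_factorization_gives_factorization
    (F K : Type) [Field F] [Field K] [Algebra F K] [IsGalois F K]
    (n : ℕ) (hn : 0 < n) (hdim : Module.finrank F K = n)
    (σ : K ≃ₐ[F] K) (hσgen : ∀ τ : K ≃ₐ[F] K, τ ∈ Subgroup.zpowers σ)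
    (R : Type) [Ring R] (ι : K →+* R) (t : R)
    (hmul : ∀ a : K, t * ι a = ι (σ a) * t)
    (coeff : R →+ (ℕ →₀ K))
    (hcoeff : ∀ (a : K) (i : ℕ), coeff (ι a * t ^ i) = Finsupp.single i a)
    (hrepr : ∀ x : R, (coeff x).sum (fun i a => ι a * t ^ i) = x)
    (ρ : R → Matrix (Fin n) (Fin n) (Polynomial K))
    (hρ : ∀ (g : R) (i : Fin n), t ^ (i : ℕ) * g =
      ∑ j : Fin n, ((ρ g i j).sum fun k a => ι a * t ^ (n * k)) * t ^ (j : ℕ))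
    (N : R → Polynomial K) (hN : ∀ g : R, N g = (ρ g).det)
    (f : R) (m : ℕ)
    (hdeg : coeff f m ≠ 0 ∧ ∀ i : ℕ, m < i → coeff f i = 0)
    (hfmonic : coeff f m = 1)
    (hgcrd : ∃ p q : R, p * f + q * t = 1)
    -- minimal central left multiple ĥ of degree m:
    (hhat : Polynomial F) (hmonic : hhat.Monic)
    (hleft : ∃ g : R, (hhat.sum fun k a => ι (algebraMap F K a) * t ^ (n * k)) = g * f)
    (hcentral : (hhat.sum fun k a => ι (algebraMap F K a) * t ^ (n * k)) ∈ Subring.center R)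
    (hminimal : ∀ c : R, c ∈ Subring.center R → c ≠ 0 → (∃ g : R, c = g * f) →
      (coeff (hhat.sum fun k a => ι (algebraMap F K a) * t ^ (n * k))).support.sup id ≤
        (coeff c).support.sup id)
    (hdeghat : hhat.natDegree = m)
    -- a factorization N(f) = ĥ₁⋯ĥ_l into irreducibles in F[x]:
    (l : ℕ) (hs : Fin l → Polynomial F) (hirr : ∀ i, Irreducible (hs i))
    (hNf : N f = Polynomial.map (algebraMap F K) (List.ofFn hs).prod) :
    ∃ fs : Fin l → R,
      f = (List.ofFn fs).prod ∧
      ∀ i, Irreducible (fs i) ∧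
        (∃ c : K, c ≠ 0 ∧ N (fs i) = Polynomial.C c * (hs i).map (algebraMap F K)) ∧
        (coeff (fs i)).support.sup id = (hs i).natDegree := by
  have hfd : FiniteDimensional F K := Module.finite_of_finrank_pos (by omega)
  let S : SkewData F K R n :=
    { hn := hn, σ := σ, ι := ι, t := t, hmul := hmul, coeff := coeff, hcoeff := hcoeff,
      hrepr := hrepr, ρ := ρ, hρ := hρ
      hσn := by
        intro a
        have : σ ^ n = 1 := by
          rw [← hdim, ← IsGalois.card_aut_eq_finrank]
          exact pow_card_eq_one'
        rw [this]; rfl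
      hfix := by
        intro a ha
        have h1 := (IsGalois.mem_bot_iff_fixed (F := F) a).2 (by
          intro τ
          have : Subgroup.zpowers σ ≤ MulAction.stabilizer (K ≃ₐ[F] K) a := by
            rw [Subgroup.zpowers_le]
            exact ha
          exact this (hσgen τ))
        exact IntermediateField.mem_bot.1 h1 }
  have hNS : ∀ g, N g = S.N g := hN
  have hDf : S.D f = m := S.D_eq hdeg.2 hdeg.1
  have hψ : ∀ p : Polynomial F, S.ψ p = p.sum fun k a => ι (algebraMap F K a) * t ^ (n * k) := by
    intro p
    rw [SkewData.ψ, SkewData.φ_eq, Polynomial.sum, Polynomial.sum,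
      Polynomial.support_map_of_injective _ (algebraMap F K).injective]
    simp only [Polynomial.coeff_map]
    rfl
  have hP : S.P f := by
    intro p hp hu
    have h1 := hminimal (S.ψ p) (by
      rw [Subring.mem_center_iff]
      exact fun g => S.ψ_comm p g) (S.ψ_ne hp) hu
    rw [← hψ] at h1
    have h2 := S.D_ψ hmonic.ne_zero
    have h3 := S.D_ψ hp
    have h4 : S.D (S.ψ hhat) ≤ S.D (S.ψ p) := h1
    rw [h2, h3, hdeghat] at h4
    rw [hDf]
    exact Nat.le_of_mul_le_mul_left h4 hn
  have hQ : S.Q f (List.ofFn hs).prod := ⟨1, one_ne_zero, by rw [← hNS, hNf]; simp⟩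
  obtain ⟨fs, h1, h2⟩ := S.main l f hs (by
    rintro rfl
    have := S.Q_deg (by simp) hQ
    simp only [List.ofFn_zero, List.prod_nil, Polynomial.natDegree_one] at this
    have h0 := S.eq_ι this
    have hm : m = 0 := by omega
    subst hm
    rw [h0, show S.coeff f 0 = 1 from hfmonic, map_one]) hP hirr hQ
  refine ⟨fs, h1, fun i => ⟨S.Q_irr (hirr i) (h2 i), ?_, S.Q_deg (hirr i).ne_zero (h2 i)⟩⟩
  obtain ⟨c, hc, hcN⟩ := h2 i
  exact ⟨c, hc, by rw [hNS, hcN]⟩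
end

section
/- Let K/F be cyclic Galois of degree n, R = K[t;σ], f ∈ R monic with gcrd(f,t)=1 and deg_x ĥ = deg_t f. If N(f) is a product of l pairwise distinct (non-associate) irreducible polynomials in F[x], then f has exactly l! distinct factorizations into irreducible monic factors in R, one for each ordering of the irreducible factors of N(f). -/
set_option linter.unusedSectionVars false

/-- The abstract properties of the norm `M`, the central embedding `c` and monicity used below. -/
structure FactHyp {A R : Type} [CommRing A] [Ring R] (M : R →* A) (c : A →+* R) (n : ℕ)
    (mon : R → Prop) : Prop where
  comm : ∀ p r, c p * r = r * c p
  Mc : ∀ p, M (c p) = p ^ n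
  dvd : ∀ g, ∃ h, c (M g) = h * g
  bez : ∀ f g : R, ∃ b, (∃ a, f = a * b) ∧ (∃ q, g = q * b) ∧ ∃ u v, b = u * f + v * g
  mon_one : mon 1
  mon_mul : ∀ a b, mon a → mon b → mon (a * b)
  mon_left : ∀ a b, mon (a * b) → mon b → mon a
  mon_unit : ∀ u b, IsUnit u → mon b → mon (u * b) → u = 1
  mon_exists : ∀ r, r ≠ 0 → ∃ u, IsUnit u ∧ mon (u * r)
  mon_ne : ∀ r, mon r → r ≠ 0

namespace FactHyp

variable {A R : Type} [CommRing A] [IsDomain A] [IsPrincipalIdealRing A] [Ring R] [IsDomain R]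
  {M : R →* A} {c : A →+* R} {n : ℕ} {mon : R → Prop}

theorem isUnit_of (H : FactHyp M c n mon) {g : R} (hg : IsUnit (M g)) : IsUnit g := by
  obtain ⟨h, hh⟩ := H.dvd g
  obtain ⟨v, hv⟩ := (hg.map c).exists_left_inv
  have h1 : (v * h) * g = 1 := by rw [mul_assoc, ← hh, hv]
  exact IsUnit.of_mul_eq_one (v * h) (mul_eq_one_comm.mp h1)

theorem irr_of (H : FactHyp M c n mon) {g : R} (hg : Irreducible (M g)) : Irreducible g := by
  refine ⟨fun h => hg.not_isUnit (h.map M), fun a b hab => ?_⟩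
  have := hg.isUnit_or_isUnit (a := M a) (b := M b) (by rw [hab, map_mul])
  exact this.imp H.isUnit_of H.isUnit_of

theorem assoc_of_split {P Q a b : A} (hPQ : IsCoprime P Q) (h : Associated (a * b) (P * Q))
    (k : ℕ) (ha : a ∣ P ^ k) (hb : b ∣ Q ^ k) : Associated a P ∧ Associated b Q := by
  have haQ : IsCoprime a Q := (IsCoprime.pow_left hPQ).of_isCoprime_of_dvd_left ha
  have hbP : IsCoprime b P := (IsCoprime.pow_left hPQ.symm).of_isCoprime_of_dvd_left hb
  have h1 : a ∣ P := haQ.dvd_of_dvd_mul_right ((Dvd.intro _ rfl).trans h.dvd)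
  have h2 : b ∣ Q := hbP.dvd_of_dvd_mul_left ((Dvd.intro_left _ rfl).trans h.dvd)
  have h3 : P ∣ a := by
    have : IsCoprime P b := hbP.symm
    exact this.dvd_of_dvd_mul_right ((Dvd.intro _ rfl).trans h.symm.dvd)
  have h4 : Q ∣ b := by
    have : IsCoprime Q a := haQ.symm
    exact this.dvd_of_dvd_mul_left ((Dvd.intro_left _ rfl).trans h.symm.dvd)
  exact ⟨associated_of_dvd_dvd h1 h3, associated_of_dvd_dvd h2 h4⟩

theorem M_dvd (H : FactHyp M c n mon) {P : A} {a r : R} (h : c P = r * a) : M a ∣ P ^ n := by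
  rw [← H.Mc, h, map_mul]; exact Dvd.intro_left _ rfl

theorem exists_split (H : FactHyp M c n mon) {f : R} (hf : mon f) {P Q : A}
    (hPQ : IsCoprime P Q) (h : Associated (M f) (P * Q)) :
    ∃ a b, f = a * b ∧ mon a ∧ mon b ∧ Associated (M a) P ∧ Associated (M b) Q := by
  obtain ⟨b₀, ⟨a₀, h1⟩, ⟨q₀, h2⟩, u₀, v₀, h3⟩ := H.bez f (c Q)
  have hb₀ : b₀ ≠ 0 := by
    rintro rfl
    exact H.mon_ne f hf (by simpa using h1)
  obtain ⟨w, hw, hmb⟩ := H.mon_exists b₀ hb₀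
  obtain ⟨w, rfl⟩ := hw
  set b := (w : R) * b₀ with hb
  have hb' : b₀ = (↑w⁻¹ : R) * b := by simp [hb]
  obtain ⟨a, ha⟩ : ∃ a, f = a * b := ⟨a₀ * ↑w⁻¹, by rw [mul_assoc, ← hb', h1]⟩
  obtain ⟨q, hq⟩ : ∃ q, c Q = q * b := ⟨q₀ * ↑w⁻¹, by rw [mul_assoc, ← hb', h2]⟩
  obtain ⟨u, v, huv⟩ : ∃ u v, b = u * f + v * c Q :=
    ⟨w * u₀, w * v₀, by rw [hb, h3]; simp only [mul_add, mul_assoc]⟩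
  have hbne := H.mon_ne b hmb
  have hone : 1 = u * a + v * q := by
    apply mul_right_cancel₀ hbne
    rw [one_mul, add_mul, mul_assoc, mul_assoc, ← ha, ← hq, ← huv]
  -- `P * Q ∈ R f`
  obtain ⟨g, hg⟩ : ∃ g, c (P * Q) = g * f := by
    obtain ⟨e, he⟩ := H.dvd f
    obtain ⟨z, hz⟩ := h.dvd
    obtain ⟨z', hz'⟩ := h
    refine ⟨c z' * e, ?_⟩
    rw [mul_assoc, ← he, ← hz', map_mul, H.comm]
  have hPq : c P * q = g * a := by
    apply mul_right_cancel₀ hbne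
    rw [mul_assoc, mul_assoc, ← hq, ← ha, ← hg, map_mul]
  have hPa : c P = (u * c P + v * g) * a := by
    calc c P = c P * (u * a + v * q) := by rw [← hone, mul_one]
      _ = (u * c P + v * g) * a := by
        rw [mul_add, ← mul_assoc, H.comm P u, ← mul_assoc, H.comm P v, mul_assoc v, hPq]
        simp only [add_mul, mul_assoc]
  have hM : Associated (M a * M b) (P * Q) := by rw [← map_mul, ← ha]; exact h
  obtain ⟨e1, e2⟩ := assoc_of_split hPQ hM n (H.M_dvd hPa) (H.M_dvd hq)
  exact ⟨a, b, ha, H.mon_left a b (ha ▸ hf) hmb, hmb, e1, e2⟩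

theorem left_mul_of (H : FactHyp M c n mon) {P Q : A} (hPQ : IsCoprime P Q) {a b a' b' : R}
    (h : a * b = a' * b') (hb0 : b ≠ 0)
    (ha : Associated (M a) P) (hb : Associated (M b) Q)
    (hb' : Associated (M b') Q) : ∃ e, b = e * b' := by
  obtain ⟨d, ⟨x, hx⟩, ⟨y, hy⟩, u, v, hd⟩ := H.bez (a * b) (c Q)
  have key : ∀ b : R, Associated (M b) Q → ∃ z, c Q = z * b := by
    intro b hb
    obtain ⟨w, hw⟩ := hb
    obtain ⟨z, hz⟩ := H.dvd b
    exact ⟨c w * z, by rw [mul_assoc, ← hz, ← hw, map_mul, H.comm]⟩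
  obtain ⟨z, hz⟩ := key b hb
  obtain ⟨z', hz'⟩ := key b' hb'
  have h1 : d = (u * a + v * z) * b := by rw [hd, hz]; simp only [add_mul, mul_assoc]
  have h2 : d = (u * a' + v * z') * b' := by rw [hd, h, hz']; simp only [add_mul, mul_assoc]
  set e := u * a + v * z
  have h3 : a = x * e := by
    apply mul_right_cancel₀ hb0
    rw [hx, mul_assoc, ← h1]
  have h4 : M e ∣ P := by
    refine Dvd.dvd.trans ?_ ha.dvd
    rw [h3, map_mul]; exact Dvd.intro_left _ rfl
  have h5 : M e ∣ Q ^ n := by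
    refine Dvd.dvd.trans ?_ (H.M_dvd hy)
    rw [h1, map_mul]; exact Dvd.intro _ rfl
  have h6 : IsUnit (M e) := (IsCoprime.pow_right hPQ).isUnit_of_dvd' h4 h5
  obtain ⟨w, hw⟩ := H.isUnit_of h6
  refine ⟨↑w⁻¹ * (u * a' + v * z'), ?_⟩
  rw [mul_assoc, ← h2, h1, ← hw, ← mul_assoc]; simp

theorem split_unique (H : FactHyp M c n mon) {P Q : A} (hPQ : IsCoprime P Q) {a b a' b' : R}
    (h : a * b = a' * b') (mb : mon b) (mb' : mon b')
    (ha : Associated (M a) P) (hb : Associated (M b) Q)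
    (ha' : Associated (M a') P) (hb' : Associated (M b') Q) : a = a' ∧ b = b' := by
  have hb0 := H.mon_ne b mb
  have hb0' := H.mon_ne b' mb'
  obtain ⟨e, he⟩ := H.left_mul_of hPQ h hb0 ha hb hb'
  obtain ⟨e', he'⟩ := H.left_mul_of hPQ h.symm hb0' ha' hb' hb
  have h1 : e * e' = 1 := by
    apply mul_right_cancel₀ hb0
    rw [mul_assoc, ← he', ← he, one_mul]
  have hu : IsUnit e := IsUnit.of_mul_eq_one e' h1
  have he1 : e = 1 := H.mon_unit e b' hu mb' (he ▸ mb)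
  have hbb : b = b' := by rw [he, he1, one_mul]
  subst hbb
  exact ⟨mul_right_cancel₀ hb0 h, rfl⟩

theorem mon_prod (H : FactHyp M c n mon) : ∀ L : List R, (∀ x ∈ L, mon x) → mon L.prod
  | [], _ => by simpa using H.mon_one
  | x :: L, h => by
    rw [List.prod_cons]
    exact H.mon_mul _ _ (h x (by simp)) (H.mon_prod L fun y hy => h y (by simp [hy]))

theorem M_prod : ∀ (l : ℕ) (gs : Fin l → R) (hs : Fin l → A),
    (∀ i, Associated (M (gs i)) (hs i)) → Associated (M (List.ofFn gs).prod) (List.ofFn hs).prod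
  | 0, _, _, _ => by simp
  | l + 1, gs, hs, h => by
    simp only [List.ofFn_succ, List.prod_cons, map_mul]
    exact (h 0).mul_mul (M_prod l _ _ fun i => h i.succ)

theorem coprime_of {p q : A} (hp : Irreducible p) (hq : Irreducible q) (h : ¬ Associated p q) :
    IsCoprime p q := by
  rw [hp.coprime_iff_not_dvd]
  intro hd
  exact h (hp.associated_of_dvd hq hd)

theorem coprime_prod (l : ℕ) (hs : Fin l → A) (p : A)
    (h : ∀ i, IsCoprime p (hs i)) : IsCoprime p (List.ofFn hs).prod := by
  rw [List.prod_ofFn]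
  exact IsCoprime.prod_right fun i _ => h i

theorem existsUnique_fact (H : FactHyp M c n mon) : ∀ (l : ℕ) (f : R) (_ : mon f) (hs : Fin l → A)
    (_ : ∀ i, Irreducible (hs i)) (_ : ∀ i j, i ≠ j → ¬ Associated (hs i) (hs j))
    (_ : Associated (M f) (List.ofFn hs).prod),
    ∃! gs : Fin l → R, f = (List.ofFn gs).prod ∧ ∀ i, mon (gs i) ∧ Associated (M (gs i)) (hs i)
  | 0, f, hf, hs, _, _, hM => by
    refine ⟨Fin.elim0, ⟨?_, fun i => i.elim0⟩, fun _ _ => Subsingleton.elim _ _⟩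
    have hu : IsUnit f := H.isUnit_of (by simpa using hM)
    simpa using H.mon_unit f 1 hu H.mon_one (by simpa using hf)
  | l + 1, f, hf, hs, hi, hd, hM => by
    have hcop : IsCoprime (hs 0) (List.ofFn fun i : Fin l => hs i.succ).prod :=
      coprime_prod l _ _ fun i => coprime_of (hi _) (hi _) (hd _ _ (Fin.succ_ne_zero i).symm)
    have hM' : Associated (M f) (hs 0 * (List.ofFn fun i : Fin l => hs i.succ).prod) := by
      simpa [List.ofFn_succ] using hM
    obtain ⟨a, b, hab, ma, mb, ha, hb⟩ := H.exists_split hf hcop hM'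
    obtain ⟨gs, ⟨hg1, hg2⟩, hg3⟩ := existsUnique_fact H l b mb (fun i => hs i.succ)
      (fun i => hi _) (fun i j hij => hd _ _ (fun h => hij (Fin.succ_injective _ h))) hb
    refine ⟨Fin.cons a gs, ⟨?_, ?_⟩, ?_⟩
    · simp [List.ofFn_succ, ← hg1, hab]
    · intro i
      refine Fin.cases ?_ (fun i => ?_) i
      · simpa using ⟨ma, ha⟩
      · simpa using hg2 i
    · rintro gs' ⟨h1, h2⟩
      rw [List.ofFn_succ, List.prod_cons] at h1
      have mb' : mon (List.ofFn fun i : Fin l => gs' i.succ).prod := by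
        apply H.mon_prod
        intro x hx
        rw [List.mem_ofFn] at hx
        obtain ⟨i, rfl⟩ := hx
        exact (h2 _).1
      have hb' := M_prod (M := M) l (fun i => gs' i.succ) (fun i => hs i.succ) fun i => (h2 _).2
      obtain ⟨e1, e2⟩ := H.split_unique hcop (hab.symm.trans h1) mb mb' ha hb (h2 0).2 hb'
      have := hg3 (fun i => gs' i.succ) ⟨e2, fun i => h2 _⟩
      rw [← this, e1]
      exact (Fin.cons_self_tail gs').symm

theorem exists_perm {l : ℕ} {ps hs : Fin l → A} (hi : ∀ i, Irreducible (hs i))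
    (hd : ∀ i j, i ≠ j → ¬ Associated (hs i) (hs j)) (hps : ∀ i, ¬ IsUnit (ps i))
    (h : Associated (∏ i, ps i) (∏ i, hs i)) :
    ∃ π : Equiv.Perm (Fin l), ∀ i, Associated (ps i) (hs (π i)) := by
  have hne : ∏ i, hs i ≠ 0 := Finset.prod_ne_zero_iff.mpr fun i _ => (hi i).ne_zero
  have hps0 : ∀ i, ps i ≠ 0 := fun i hi0 => by
    apply hne
    have : ∏ i, ps i = 0 := Finset.prod_eq_zero (Finset.mem_univ i) hi0
    rw [this] at h
    exact (associated_zero_iff_eq_zero _).mp h.symm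
  have hex : ∀ i, ∃ j, hs j ∣ ps i := by
    intro i
    obtain ⟨p, hp, hpd⟩ := WfDvdMonoid.exists_irreducible_factor (hps i) (hps0 i)
    have h1 : p ∣ ∏ i, hs i := (hpd.trans (Finset.dvd_prod_of_mem ps (Finset.mem_univ i))).trans h.dvd
    obtain ⟨j, -, hj⟩ := (hp.prime.dvd_finsetProd_iff _).mp h1
    exact ⟨j, (hp.associated_of_dvd (hi j) hj).symm.dvd.trans hpd⟩
  choose π hπ using hex
  have hinj : Function.Injective π := by
    intro i j hij
    by_contra hne'
    have h1 : hs (π i) * hs (π i) ∣ ∏ i, ps i := by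
      rw [← Finset.mul_prod_erase _ _ (Finset.mem_univ i)]
      refine mul_dvd_mul (hπ i) ?_
      refine Dvd.dvd.trans (hij ▸ hπ j) (Finset.dvd_prod_of_mem ps ?_)
      simp [Ne.symm hne']
    have h2 := h1.trans h.dvd
    rw [← Finset.mul_prod_erase _ _ (Finset.mem_univ (π i))] at h2
    have h3 := (mul_dvd_mul_iff_left (hi (π i)).ne_zero).mp h2
    obtain ⟨k, hk, hkd⟩ := ((hi (π i)).prime.dvd_finsetProd_iff _).mp h3
    exact hd (π i) k (by simpa [eq_comm] using hk) ((hi _).associated_of_dvd (hi _) hkd)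
  let e : Equiv.Perm (Fin l) := Equiv.ofBijective π (Finite.injective_iff_bijective.mp hinj)
  refine ⟨e, fun i => ?_⟩
  choose q hq using hπ
  have h1 : ∏ i, ps i = (∏ i, hs i) * ∏ i, q i := by
    rw [← Equiv.prod_comp e hs, ← Finset.prod_mul_distrib]
    exact Finset.prod_congr rfl fun i _ => hq i
  rw [h1] at h
  have h2 : IsUnit (∏ i, q i) := by
    obtain ⟨u, hu⟩ := h
    rw [mul_assoc] at hu
    exact IsUnit.of_mul_eq_one _ (mul_left_cancel₀ hne (hu.trans (mul_one _).symm))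
  have h3 : IsUnit (q i) := isUnit_of_dvd_unit (Finset.dvd_prod_of_mem q (Finset.mem_univ i)) h2
  rw [hq i]
  exact (associated_mul_unit_right _ _ h3).symm

theorem card_fact (H : FactHyp M c n mon) {l : ℕ} {f : R} (hf : mon f) {hs : Fin l → A}
    (hi : ∀ i, Irreducible (hs i)) (hd : ∀ i j, i ≠ j → ¬ Associated (hs i) (hs j))
    (hM : M f = (List.ofFn hs).prod) :
    Nat.card {gs : Fin l → R // f = (List.ofFn gs).prod ∧ ∀ i, Irreducible (gs i) ∧ mon (gs i)}
      = Nat.factorial l := by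
  have hM' : ∀ π : Equiv.Perm (Fin l), Associated (M f) (List.ofFn fun i => hs (π i)).prod := by
    intro π
    rw [hM, List.prod_ofFn, List.prod_ofFn, Equiv.prod_comp π hs]
  have hu := fun π : Equiv.Perm (Fin l) => H.existsUnique_fact l f hf (fun i => hs (π i))
    (fun i => hi _) (fun i j hij => hd _ _ (fun h => hij (π.injective h))) (hM' π)
  choose G hG hGu using hu
  let Φ : Equiv.Perm (Fin l) → {gs : Fin l → R // f = (List.ofFn gs).prod ∧
      ∀ i, Irreducible (gs i) ∧ mon (gs i)} := fun π => ⟨G π, (hG π).1, fun i =>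
        ⟨H.irr_of (((hG π).2 i).2.symm.irreducible (hi _)), ((hG π).2 i).1⟩⟩
  have hΦ : Function.Bijective Φ := by
    constructor
    · intro π π' h
      have h' : G π = G π' := congrArg Subtype.val h
      ext i
      by_contra hne
      refine hd (π i) (π' i) (fun h => hne (by rw [h])) ?_
      have h1 := ((hG π).2 i).2
      rw [h'] at h1
      exact h1.symm.trans ((hG π').2 i).2
    · rintro ⟨gs, h1, h2⟩
      obtain ⟨π, hπ⟩ := exists_perm (ps := fun i => M (gs i)) hi hd
        (fun i hu => (h2 i).1.not_isUnit (H.isUnit_of hu)) (by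
          rw [← List.prod_ofFn, ← List.prod_ofFn, ← hM, h1, map_list_prod, List.map_ofFn]
          rfl)
      refine ⟨π, Subtype.ext ?_⟩
      exact (hGu π gs ⟨h1, fun i => ⟨(h2 i).2, hπ i⟩⟩).symm
  rw [← Nat.card_congr (Equiv.ofBijective Φ hΦ), Nat.card_perm, Nat.card_fin]

end FactHyp

/-- The presentation of `R` as the skew polynomial ring `K[t;σ]`. -/
structure SkewHyp {F K R : Type} [Field F] [Field K] [Algebra F K] (σ : K ≃ₐ[F] K) [Ring R]
    (ι : K →+* R) (t : R) (coeff : R →+ (ℕ →₀ K)) : Prop where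
  hmul : ∀ a : K, t * ι a = ι (σ a) * t
  hcoeff : ∀ (a : K) (i : ℕ), coeff (ι a * t ^ i) = Finsupp.single i a
  hrepr : ∀ x : R, (coeff x).sum (fun i a => ι a * t ^ i) = x

namespace SkewHyp

variable {F K R : Type} [Field F] [Field K] [Algebra F K] {σ : K ≃ₐ[F] K} [Ring R]
    {ι : K →+* R} {t : R} {coeff : R →+ (ℕ →₀ K)}

theorem tpow (S : SkewHyp σ ι t coeff) (i : ℕ) (a : K) : t ^ i * ι a = ι ((σ ^ i) a) * t ^ i := by
  induction i generalizing a with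
  | zero => simp
  | succ i ih =>
    rw [pow_succ, mul_assoc, S.hmul, ← mul_assoc, ih, mul_assoc, pow_succ σ]
    rfl

theorem ind (S : SkewHyp σ ι t coeff) {p : R → Prop} (h0 : p 0)
    (hadd : ∀ x y, p x → p y → p (x + y)) (hm : ∀ a i, p (ι a * t ^ i)) (x : R) : p x := by
  rw [← S.hrepr x]
  exact Finset.sum_induction _ p hadd h0 fun i _ => hm _ _

theorem inj (S : SkewHyp σ ι t coeff) {x y : R} (h : coeff x = coeff y) : x = y := by
  rw [← S.hrepr x, ← S.hrepr y, h]

theorem coeff_mul (S : SkewHyp σ ι t coeff) (g h : R) (k : ℕ) :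
    coeff (g * h) k =
      ∑ x ∈ Finset.HasAntidiagonal.antidiagonal k, coeff g x.1 * (σ ^ x.1) (coeff h x.2) := by
  induction g using S.ind with
  | h0 => simp
  | hadd x y hx hy => simp only [add_mul, map_add, Finsupp.add_apply, hx, hy, Finset.sum_add_distrib]
  | hm a i =>
    induction h using S.ind with
    | h0 => simp
    | hadd x y hx hy => simp only [mul_add, map_add, Finsupp.add_apply, hx, hy, Finset.sum_add_distrib]
    | hm b j =>
      have : ι a * t ^ i * (ι b * t ^ j) = ι (a * (σ ^ i) b) * t ^ (i + j) := by
        rw [map_mul, pow_add, mul_assoc, ← mul_assoc (t ^ i), S.tpow]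
        simp only [mul_assoc]
      rw [this]
      simp only [S.hcoeff]
      by_cases hk : i + j = k
      · subst hk
        rw [Finset.sum_eq_single (i, j)]
        · simp
        · rintro ⟨i', j'⟩ hm hne
          rw [Finset.HasAntidiagonal.mem_antidiagonal] at hm
          simp only [Finsupp.single_apply]
          split_ifs <;> simp_all
        · simp
      · rw [Finsupp.single_apply, if_neg hk, Finset.sum_eq_zero]
        rintro ⟨i', j'⟩ hm
        rw [Finset.HasAntidiagonal.mem_antidiagonal] at hm
        simp only [Finsupp.single_apply]
        split_ifs <;> simp_all

/-- degree -/
noncomputable def nd (coeff : R →+ (ℕ →₀ K)) (g : R) : ℕ := (coeff g).support.sup id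

/-- leading coefficient -/
noncomputable def lc (coeff : R →+ (ℕ →₀ K)) (g : R) : K := coeff g (nd coeff g)

theorem coeff_gt {g : R} {i : ℕ} (h : nd coeff g < i) : coeff g i = 0 := by
  by_contra hc
  have : i ≤ nd coeff g := Finset.le_sup (f := id) (Finsupp.mem_support_iff.mpr hc)
  omega

theorem nd_eq {g : R} {d : ℕ} (h : coeff g d ≠ 0) (h' : ∀ i, d < i → coeff g i = 0) :
    nd coeff g = d := by
  apply le_antisymm
  · apply Finset.sup_le
    intro i hi
    by_contra hc
    exact (Finsupp.mem_support_iff.mp hi) (h' i (by simpa using hc))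
  · exact Finset.le_sup (f := id) (Finsupp.mem_support_iff.mpr h)

theorem lc_ne (S : SkewHyp σ ι t coeff) {g : R} (h : g ≠ 0) : lc coeff g ≠ 0 := by
  have hne : (coeff g).support.Nonempty := by
    rw [Finsupp.support_nonempty_iff]
    intro h0
    exact h (S.inj (by rw [h0, map_zero]))
  obtain ⟨i, hi, h2⟩ := Finset.exists_mem_eq_sup _ hne id
  have : nd coeff g = i := h2
  rw [lc, this]
  exact Finsupp.mem_support_iff.mp hi

theorem lc_zero : lc coeff (0 : R) = 0 := by simp [lc]

theorem ne_of_lc {g : R} (h : lc coeff g = 1) : g ≠ 0 := by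
  rintro rfl
  rw [lc_zero] at h
  exact zero_ne_one h

theorem coeff_top (S : SkewHyp σ ι t coeff) (g h : R) :
    coeff (g * h) (nd coeff g + nd coeff h) = lc coeff g * (σ ^ nd coeff g) (lc coeff h) := by
  rw [S.coeff_mul, Finset.sum_eq_single (nd coeff g, nd coeff h)]
  · rfl
  · rintro ⟨i, j⟩ hm hne
    rw [Finset.HasAntidiagonal.mem_antidiagonal] at hm
    simp only at hm ⊢
    rcases lt_trichotomy (nd coeff g) i with h1 | h1 | h1
    · rw [coeff_gt h1, zero_mul]
    · exact absurd (Prod.ext h1.symm (by simp only; omega)) hne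
    · rw [coeff_gt (i := j) (by omega), map_zero, mul_zero]
  · simp

theorem coeff_above (S : SkewHyp σ ι t coeff) (g h : R) (k : ℕ)
    (hk : nd coeff g + nd coeff h < k) : coeff (g * h) k = 0 := by
  rw [S.coeff_mul, Finset.sum_eq_zero]
  rintro ⟨i, j⟩ hm
  rw [Finset.HasAntidiagonal.mem_antidiagonal] at hm
  simp only at hm ⊢
  rcases lt_or_ge (nd coeff g) i with h1 | h1
  · rw [coeff_gt h1, zero_mul]
  · rw [coeff_gt (i := j) (by omega), map_zero, mul_zero]

theorem top_ne (S : SkewHyp σ ι t coeff) {g h : R} (hg : g ≠ 0) (hh : h ≠ 0) :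
    lc coeff g * (σ ^ nd coeff g) (lc coeff h) ≠ 0 :=
  mul_ne_zero (S.lc_ne hg) ((map_ne_zero_iff _ (σ ^ nd coeff g).injective).mpr (S.lc_ne hh))

theorem nd_mul (S : SkewHyp σ ι t coeff) {g h : R} (hg : g ≠ 0) (hh : h ≠ 0) :
    nd coeff (g * h) = nd coeff g + nd coeff h :=
  nd_eq (by rw [S.coeff_top]; exact S.top_ne hg hh) fun _ => S.coeff_above g h _

theorem lc_mul (S : SkewHyp σ ι t coeff) {g h : R} (hg : g ≠ 0) (hh : h ≠ 0) :
    lc coeff (g * h) = lc coeff g * (σ ^ nd coeff g) (lc coeff h) := by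
  rw [lc, S.nd_mul hg hh, S.coeff_top]

theorem nd_mono (S : SkewHyp σ ι t coeff) {a : K} (ha : a ≠ 0) (i : ℕ) :
    nd coeff (ι a * t ^ i) = i :=
  nd_eq (by simp [S.hcoeff, ha]) fun j hj => by simp [S.hcoeff, Finsupp.single_apply, hj.ne]

theorem lc_mono (S : SkewHyp σ ι t coeff) (a : K) (i : ℕ) :
    lc coeff (ι a * t ^ i) = a := by
  by_cases ha : a = 0
  · simp [ha, lc_zero]
  · rw [lc, S.nd_mono ha, S.hcoeff, Finsupp.single_eq_same]

theorem mono_ne (S : SkewHyp σ ι t coeff) {a : K} (ha : a ≠ 0) (i : ℕ) : ι a * t ^ i ≠ 0 := by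
  intro h
  have := S.lc_mono a i
  rw [h, lc_zero] at this
  exact ha this.symm

theorem isDomain (S : SkewHyp σ ι t coeff) : IsDomain R := by
  have h1 : (1 : R) ≠ 0 := by simpa using S.mono_ne (a := 1) one_ne_zero 0
  have : Nontrivial R := ⟨1, 0, h1⟩
  have : NoZeroDivisors R := ⟨fun {a b} hab => by
    by_contra hc
    push Not at hc
    have := S.top_ne hc.1 hc.2
    rw [← S.coeff_top, hab] at this
    simp at this⟩
  exact NoZeroDivisors.to_isDomain R

theorem nd_lt {g : R} {d : ℕ} (hd : 0 < d) (h : ∀ i, d ≤ i → coeff g i = 0) : nd coeff g < d := by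
  rw [nd, Finset.sup_lt_iff (by simpa using hd)]
  intro i hi
  by_contra hc
  exact (Finsupp.mem_support_iff.mp hi) (h i (by simpa using hc))

theorem div (S : SkewHyp σ ι t coeff) {b : R} (hb : b ≠ 0) : ∀ (d : ℕ) (g : R),
    (∀ i, d ≤ i → coeff g i = 0) → ∃ q r, g = q * b + r ∧ ∀ i, nd coeff b ≤ i → coeff r i = 0
  | 0, g, h => ⟨0, g, by simp, fun i _ => h i (Nat.zero_le i)⟩
  | d + 1, g, h => by
    rcases lt_or_ge d (nd coeff b) with h1 | h1
    · exact ⟨0, g, by simp, fun i hi => h i (by omega)⟩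
    by_cases ha : coeff g d = 0
    · exact S.div hb d g fun i hi => by
        rcases hi.eq_or_lt with rfl | h2
        · exact ha
        · exact h i h2
    have := S.isDomain
    set k := d - nd coeff b with hk
    have hβ : (σ ^ k) (lc coeff b) ≠ 0 :=
      (map_ne_zero_iff _ (σ ^ k).injective).mpr (S.lc_ne hb)
    set a := coeff g d * ((σ ^ k) (lc coeff b))⁻¹ with ha'
    have hane : a ≠ 0 := mul_ne_zero ha (inv_ne_zero hβ)
    have hnd := S.nd_mul (S.mono_ne hane k) hb
    rw [S.nd_mono hane k] at hnd
    have hlc := S.lc_mul (S.mono_ne hane k) hb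
    rw [S.nd_mono hane k, S.lc_mono] at hlc
    have hdd : k + nd coeff b = d := by omega
    obtain ⟨q, r, h2, h3⟩ := S.div hb d (g - ι a * t ^ k * b) (by
      intro i hi
      rw [map_sub, Finsupp.sub_apply]
      rcases hi.eq_or_lt with rfl | h2
      · rw [lc, hnd, hdd] at hlc
        rw [hlc, ha', mul_assoc, inv_mul_cancel₀ hβ, mul_one, sub_self]
      · rw [h i h2, coeff_gt (by rw [hnd, hdd]; exact h2), sub_zero])
    refine ⟨q + ι a * t ^ k, r, ?_, h3⟩
    rw [add_mul, add_right_comm, ← h2, sub_add_cancel]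

theorem bez (S : SkewHyp σ ι t coeff) : ∀ (d : ℕ) (f g : R), (∀ i, d ≤ i → coeff g i = 0) →
    ∃ b, (∃ a, f = a * b) ∧ (∃ q, g = q * b) ∧ ∃ u v, b = u * f + v * g := by
  intro d
  induction d using Nat.strong_induction_on with
  | _ d ih =>
    intro f g h
    by_cases hg : g = 0
    · exact ⟨f, ⟨1, by simp⟩, ⟨0, by simp [hg]⟩, 1, 0, by simp⟩
    have hlt : nd coeff g < d := by
      by_contra hc
      exact S.lc_ne hg (h _ (by omega))
    obtain ⟨q, r, h1, h2⟩ := S.div hg (nd coeff f + 1) f fun i hi => coeff_gt (by omega)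
    obtain ⟨b, ⟨a, ha⟩, ⟨z, hz⟩, u, v, huv⟩ := ih _ hlt g r h2
    refine ⟨b, ⟨q * a + z, ?_⟩, ⟨a, ha⟩, v, u - v * q, ?_⟩
    · rw [add_mul, mul_assoc, ← ha, ← hz, h1]
    · rw [huv, h1]; noncomm_ring

theorem isUnit_ι {a : K} (ha : a ≠ 0) : IsUnit (ι a) := (IsUnit.mk0 a ha).map ι

theorem eq_ι_of_nd (S : SkewHyp σ ι t coeff) {g : R} (h : nd coeff g = 0) :
    g = ι (lc coeff g) := by
  apply S.inj
  have : ι (lc coeff g) = ι (lc coeff g) * t ^ 0 := by simp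
  rw [this, S.hcoeff, lc, h]
  ext i
  rcases Nat.eq_zero_or_pos i with rfl | hi
  · simp
  · rw [coeff_gt (by omega), Finsupp.single_apply, if_neg hi.ne]

theorem lc_one (S : SkewHyp σ ι t coeff) : lc coeff (1 : R) = 1 := by
  simpa using S.lc_mono 1 0

theorem nd_one (S : SkewHyp σ ι t coeff) : nd coeff (1 : R) = 0 := by
  simpa using S.nd_mono (a := 1) one_ne_zero 0

theorem mon_unit (S : SkewHyp σ ι t coeff) (u b : R) (hu : IsUnit u) (hb : lc coeff b = 1)
    (hub : lc coeff (u * b) = 1) : u = 1 := by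
  have := S.isDomain
  have hu0 : u ≠ 0 := hu.ne_zero
  obtain ⟨v, hv⟩ := hu.exists_right_inv
  have hv0 : v ≠ 0 := by rintro rfl; simp at hv
  have h1 := S.nd_mul hu0 hv0
  rw [hv, S.nd_one] at h1
  have h2 : nd coeff u = 0 := by omega
  rw [S.lc_mul hu0 (ne_of_lc hb), hb, map_one, mul_one] at hub
  rw [S.eq_ι_of_nd h2, hub, map_one]

theorem mon_exists (S : SkewHyp σ ι t coeff) (r : R) (hr : r ≠ 0) :
    ∃ u, IsUnit u ∧ lc coeff (u * r) = 1 := by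
  have h := inv_ne_zero (S.lc_ne hr)
  refine ⟨ι (lc coeff r)⁻¹, isUnit_ι h, ?_⟩
  have h0 : ι (lc coeff r)⁻¹ = ι (lc coeff r)⁻¹ * t ^ 0 := by simp
  have h1 := S.lc_mul (S.mono_ne h 0) hr
  rw [S.nd_mono h, S.lc_mono] at h1
  rw [h0, h1]
  simpa using inv_mul_cancel₀ (S.lc_ne hr)

/-! The matrix representation. -/

/-- The embedding of `K[x]` -/
noncomputable def E (S : SkewHyp σ ι t coeff) (n : ℕ) (hσ : σ ^ n = 1) : Polynomial K →+* R :=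
  Polynomial.eval₂RingHom' ι (t ^ n) fun a => by
    rw [commute_iff_eq, S.tpow, hσ]; rfl

variable {n : ℕ} {hσ : σ ^ n = 1}

theorem E_apply (S : SkewHyp σ ι t coeff) (p : Polynomial K) :
    S.E n hσ p = p.sum fun k a => ι a * t ^ (n * k) := by
  simp only [pow_mul]
  exact Polynomial.eval₂_eq_sum

theorem E_mono (S : SkewHyp σ ι t coeff) (k : ℕ) (a : K) :
    S.E n hσ (Polynomial.monomial k a) = ι a * t ^ (n * k) := by
  rw [E_apply, Polynomial.sum_monomial_index]
  simp

theorem coeff_E (S : SkewHyp σ ι t coeff) (p : Polynomial K) (i j : Fin n) (k : ℕ) :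
    coeff (S.E n hσ p * t ^ (i : ℕ)) (n * k + j) = if i = j then p.coeff k else 0 := by
  induction p using Polynomial.induction_on' with
  | add p q hp hq =>
    rw [map_add (S.E n hσ), add_mul, map_add coeff, Finsupp.add_apply, hp, hq, Polynomial.coeff_add]
    split_ifs <;> simp
  | monomial e a =>
    rw [E_mono, mul_assoc, ← pow_add, S.hcoeff, Finsupp.single_apply, Polynomial.coeff_monomial]
    have hi := i.2
    have hj := j.2
    have hn : 0 < n := by omega
    have : n * e + i = n * k + j ↔ i = j ∧ e = k := by
      constructor
      · intro h
        have h1 := congrArg (· % n) h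
        simp only [Nat.mul_add_mod, Nat.mod_eq_of_lt hi, Nat.mod_eq_of_lt hj] at h1
        refine ⟨Fin.ext h1, ?_⟩
        rw [h1] at h
        exact Nat.eq_of_mul_eq_mul_left hn (by omega)
      · rintro ⟨rfl, rfl⟩; rfl
    simp only [this]
    by_cases h1 : i = j <;> simp [h1]

theorem row_inj (S : SkewHyp σ ι t coeff) {p q : Fin n → Polynomial K}
    (h : ∑ j, S.E n hσ (p j) * t ^ (j : ℕ) = ∑ j, S.E n hσ (q j) * t ^ (j : ℕ)) : p = q := by
  have key : ∀ (p : Fin n → Polynomial K) (j : Fin n) (k : ℕ),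
      coeff (∑ i, S.E n hσ (p i) * t ^ (i : ℕ)) (n * k + j) = (p j).coeff k := by
    intro p j k
    rw [map_sum, Finsupp.finsetSum_apply]
    simp only [coeff_E]
    simp
  funext j
  ext k
  rw [← key p, ← key q, h]

theorem t_E (S : SkewHyp σ ι t coeff) (p : Polynomial K) :
    t * S.E n hσ p = S.E n hσ (p.map (σ : K →+* K)) * t := by
  induction p using Polynomial.induction_on' with
  | add p q hp hq => simp [mul_add, add_mul, hp, hq]
  | monomial e a =>
    rw [Polynomial.map_monomial, E_mono, E_mono, ← mul_assoc, S.hmul, mul_assoc, mul_assoc,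
      ← pow_succ', ← pow_succ]
    rfl

variable {ρ : R → Matrix (Fin n) (Fin n) (Polynomial K)}

theorem ρ_mul (S : SkewHyp σ ι t coeff)
    (hρ : ∀ (g : R) (i : Fin n), t ^ (i : ℕ) * g = ∑ j, S.E n hσ (ρ g i j) * t ^ (j : ℕ))
    (g h : R) : ρ (g * h) = ρ g * ρ h := by
  funext i
  apply S.row_inj (hσ := hσ)
  rw [← hρ, ← mul_assoc, hρ, Finset.sum_mul]
  simp only [Matrix.mul_apply, map_sum, map_mul, Finset.sum_mul, mul_assoc, hρ h, Finset.mul_sum]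
  rw [Finset.sum_comm]

theorem ρ_central (S : SkewHyp σ ι t coeff)
    (hρ : ∀ (g : R) (i : Fin n), t ^ (i : ℕ) * g = ∑ j, S.E n hσ (ρ g i j) * t ^ (j : ℕ))
    (p : Polynomial K) (hp : ∀ r, S.E n hσ p * r = r * S.E n hσ p) :
    ρ (S.E n hσ p) = p • (1 : Matrix (Fin n) (Fin n) (Polynomial K)) := by
  funext i
  apply S.row_inj (hσ := hσ)
  rw [← hρ, ← hp, Finset.sum_eq_single i]
  · simp
  · intro j _ hj
    simp [Matrix.one_apply, hj.symm]
  · simp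

theorem ρ_t (S : SkewHyp σ ι t coeff)
    (hρ : ∀ (g : R) (i : Fin n), t ^ (i : ℕ) * g = ∑ j, S.E n hσ (ρ g i j) * t ^ (j : ℕ))
    (g : R) : ρ (t * g) = (Polynomial.mapRingHom (σ : K →+* K)).mapMatrix (ρ g) * ρ t := by
  funext i
  apply S.row_inj (hσ := hσ)
  rw [← hρ, ← mul_assoc, ← pow_succ, pow_succ', mul_assoc, hρ, Finset.mul_sum]
  simp only [Matrix.mul_apply, map_sum, map_mul, Finset.sum_mul, mul_assoc]
  rw [Finset.sum_comm]
  refine Finset.sum_congr rfl fun j _ => ?_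
  rw [← mul_assoc, S.t_E, mul_assoc, ← pow_succ', pow_succ, hρ, Finset.mul_sum]
  rfl

theorem E_det (S : SkewHyp σ ι t coeff) (hn : 0 < n)
    (hρ : ∀ (g : R) (i : Fin n), t ^ (i : ℕ) * g = ∑ j, S.E n hσ (ρ g i j) * t ^ (j : ℕ))
    (g : R) : ∃ h, S.E n hσ (ρ g).det = h * g := by
  let z : Fin n := ⟨0, hn⟩
  refine ⟨∑ i, S.E n hσ ((ρ g).adjugate z i) * t ^ (i : ℕ), ?_⟩
  simp only [Finset.sum_mul, mul_assoc, hρ g, Finset.mul_sum]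
  rw [Finset.sum_comm]
  simp only [← mul_assoc, ← map_mul, ← Finset.sum_mul, ← map_sum]
  simp only [← Matrix.mul_apply, Matrix.adjugate_mul]
  rw [Finset.sum_eq_single z]
  · simp [z]
  · intro j _ hj
    simp [Matrix.one_apply, hj.symm]
  · simp

end SkewHyp

namespace SkewHyp

theorem central {F K R : Type} [Field F] [Field K] [Algebra F K] {σ : K ≃ₐ[F] K} [Ring R]
    {ι : K →+* R} {t : R} {coeff : R →+ (ℕ →₀ K)} {n : ℕ} {hσ : σ ^ n = 1}
    (S : SkewHyp σ ι t coeff) (p : Polynomial F) (r : R) :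
    S.E n hσ (p.map (algebraMap F K)) * r = r * S.E n hσ (p.map (algebraMap F K)) := by
  have ht : Commute (S.E n hσ (p.map (algebraMap F K))) t := by
    rw [commute_iff_eq, S.t_E, Polynomial.map_map]
    congr 3
    ext a
    simp
  induction r using S.ind with
  | h0 => simp
  | hadd x y hx hy => simp [add_mul, mul_add, hx, hy]
  | hm a i =>
    have h1 : Commute (S.E n hσ (p.map (algebraMap F K))) (ι a) := by
      have : ι a = S.E n hσ (Polynomial.C a) := by
        rw [← Polynomial.monomial_zero_left, E_mono]; simp
      rw [this]
      exact (Commute.all _ _).map _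
    exact h1.mul_right (ht.pow_right i)

end SkewHyp

/-- If `N(f)` is a product of `l` pairwise non-associate irreducible polynomials
in `F[x]`, then `f` has exactly `l!` factorizations into irreducible monic
factors in `R = K[t;σ]`. -/
theorem count_of_factorizations
    (F K : Type) [Field F] [Field K] [Algebra F K] [IsGalois F K]
    (n : ℕ) (hn : 0 < n) (hdim : Module.finrank F K = n)
    (σ : K ≃ₐ[F] K) (hσgen : ∀ τ : K ≃ₐ[F] K, τ ∈ Subgroup.zpowers σ)
    (R : Type) [Ring R] (ι : K →+* R) (t : R)
    (hmul : ∀ a : K, t * ι a = ι (σ a) * t)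
    (coeff : R →+ (ℕ →₀ K))
    (hcoeff : ∀ (a : K) (i : ℕ), coeff (ι a * t ^ i) = Finsupp.single i a)
    (hrepr : ∀ x : R, (coeff x).sum (fun i a => ι a * t ^ i) = x)
    (ρ : R → Matrix (Fin n) (Fin n) (Polynomial K))
    (hρ : ∀ (g : R) (i : Fin n), t ^ (i : ℕ) * g =
      ∑ j : Fin n, ((ρ g i j).sum fun k a => ι a * t ^ (n * k)) * t ^ (j : ℕ))
    (N : R → Polynomial K) (hN : ∀ g : R, N g = (ρ g).det)
    (f : R) (m : ℕ)
    (hdeg : coeff f m ≠ 0 ∧ ∀ i : ℕ, m < i → coeff f i = 0)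
    (hfmonic : coeff f m = 1)
    (hgcrd : ∃ p q : R, p * f + q * t = 1)
    (hhat : Polynomial F) (hmonic : hhat.Monic)
    (hleft : ∃ g : R, (hhat.sum fun k a => ι (algebraMap F K a) * t ^ (n * k)) = g * f)
    (hcentral : (hhat.sum fun k a => ι (algebraMap F K a) * t ^ (n * k)) ∈ Subring.center R)
    (hminimal : ∀ c : R, c ∈ Subring.center R → c ≠ 0 → (∃ g : R, c = g * f) →
      (coeff (hhat.sum fun k a => ι (algebraMap F K a) * t ^ (n * k))).support.sup id ≤
        (coeff c).support.sup id)
    (hdeghat : hhat.natDegree = m)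
    -- N(f) = ĥ₁⋯ĥ_l with the ĥ_i pairwise non-associate irreducibles in F[x]:
    (l : ℕ) (hs : Fin l → Polynomial F) (hirr : ∀ i, Irreducible (hs i))
    (hdist : ∀ i j, i ≠ j → ¬ Associated (hs i) (hs j))
    (hNf : N f = Polynomial.map (algebraMap F K) (List.ofFn hs).prod) :
    Nat.card {gs : Fin l → R //
      f = (List.ofFn gs).prod ∧
      ∀ i, Irreducible (gs i) ∧
        (coeff (gs i)) ((coeff (gs i)).support.sup id) = 1} = Nat.factorial l := by
  have hfin : FiniteDimensional F K := FiniteDimensional.of_finrank_pos (by omega)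
  have hσ : σ ^ n = 1 := by
    rw [← hdim, ← IsGalois.card_aut_eq_finrank F K]
    exact pow_card_eq_one'
  have S : SkewHyp σ ι t coeff := ⟨hmul, hcoeff, hrepr⟩
  have hdom : IsDomain R := S.isDomain
  have hρ' : ∀ (g : R) (i : Fin n), t ^ (i : ℕ) * g =
      ∑ j, S.E n hσ (ρ g i j) * t ^ (j : ℕ) := by
    intro g i
    simp only [S.E_apply]
    exact hρ g i
  have hρc : ∀ p : Polynomial F, (ρ (S.E n hσ (p.map (algebraMap F K)))).det =
      (p.map (algebraMap F K)) ^ n := by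
    intro p
    rw [S.ρ_central hρ' _ (S.central p), Matrix.det_smul, Matrix.det_one, mul_one, Fintype.card_fin]
  have hdetmul : ∀ g h, (ρ (g * h)).det = (ρ g).det * (ρ h).det := by
    intro g h
    rw [S.ρ_mul hρ', Matrix.det_mul]
  have hdetone : (ρ 1).det = 1 := by
    have := hρc 1
    simpa using this
  have hinj : Function.Injective (Polynomial.map (algebraMap F K)) :=
    Polynomial.map_injective _ (algebraMap F K).injective
  have hdett : (ρ t).det ≠ 0 := by
    have h1 := hρc Polynomial.X
    have h2 : S.E n hσ (Polynomial.X.map (algebraMap F K)) = t ^ (n - 1) * t := by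
      rw [← pow_succ, Nat.sub_add_cancel hn, Polynomial.map_X, ← Polynomial.monomial_one_one_eq_X,
        S.E_mono]
      simp
    rw [h2, hdetmul, Polynomial.map_X] at h1
    intro h0
    rw [h0, mul_zero] at h1
    exact pow_ne_zero n Polynomial.X_ne_zero h1.symm
  have hfix : ∀ g, (ρ g).det.map (σ : K →+* K) = (ρ g).det := by
    intro g
    have h1 : (ρ (t * g)).det = (ρ g).det.map (σ : K →+* K) * (ρ t).det := by
      rw [S.ρ_t hρ', Matrix.det_mul, ← RingHom.map_det]
      rfl
    rw [hdetmul, mul_comm] at h1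
    exact (mul_right_cancel₀ hdett h1).symm
  have hex : ∀ g, ∃ p : Polynomial F, p.map (algebraMap F K) = (ρ g).det := by
    intro g
    rw [← Polynomial.mem_lifts, Polynomial.lifts_iff_coeff_lifts]
    intro k
    rw [IsGalois.mem_range_algebraMap_iff_fixed]
    intro τ
    have hk : σ ((ρ g).det.coeff k) = (ρ g).det.coeff k := by
      conv_rhs => rw [← hfix g, Polynomial.coeff_map]
      rfl
    have : Subgroup.zpowers σ ≤ MulAction.stabilizer (K ≃ₐ[F] K) ((ρ g).det.coeff k) := by
      rw [Subgroup.zpowers_le]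
      exact hk
    exact this (hσgen τ)
  choose M₀ hM₀ using hex
  let M : R →* Polynomial F :=
    { toFun := M₀
      map_one' := hinj (by rw [hM₀, hdetone, Polynomial.map_one])
      map_mul' := fun g h => hinj (by rw [Polynomial.map_mul, hM₀, hM₀, hM₀, hdetmul]) }
  let c : Polynomial F →+* R := (S.E n hσ).comp (Polynomial.mapRingHom (algebraMap F K))
  have H : FactHyp M c n (fun g => SkewHyp.lc coeff g = 1) :=
    { comm := fun p r => S.central (hσ := hσ) p r
      Mc := fun p => hinj (by
        rw [Polynomial.map_pow]
        exact (hM₀ _).trans (hρc p))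
      dvd := fun g => by
        obtain ⟨h, hh⟩ := S.E_det hn hρ' g
        refine ⟨h, Eq.trans ?_ hh⟩
        rw [← hM₀]
        rfl
      bez := fun f g => S.bez (SkewHyp.nd coeff g + 1) f g fun i hi => SkewHyp.coeff_gt (by omega)
      mon_one := S.lc_one
      mon_mul := fun a b ha hb => by
        rw [S.lc_mul (SkewHyp.ne_of_lc ha) (SkewHyp.ne_of_lc hb), ha, hb, map_one, mul_one]
      mon_left := fun a b hab hb => by
        have ha : a ≠ 0 := by
          rintro rfl
          exact SkewHyp.ne_of_lc hab (zero_mul b)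
        rwa [S.lc_mul ha (SkewHyp.ne_of_lc hb), hb, map_one, mul_one] at hab
      mon_unit := S.mon_unit
      mon_exists := S.mon_exists
      mon_ne := fun r hr => SkewHyp.ne_of_lc hr }
  have hf : SkewHyp.lc coeff f = 1 := by
    rw [SkewHyp.lc, SkewHyp.nd_eq hdeg.1 hdeg.2, hfmonic]
  have hMf : M f = (List.ofFn hs).prod := hinj ((hM₀ f).trans ((hN f).symm.trans hNf))
  exact H.card_fact hf hirr hdist hMf
end

section
/- In the setting R = K[t;δ] with δ algebraic with minimum p-polynomial g of degree p^e and Const(δ) = F, every f ∈ R divides its reduced norm: N(f) ∈ F[x] (x = g(t)) and there is f^♯ ∈ R with N(f) = f·f^♯ = f^♯·f. Moreover if f = a₀ + a₁t + ⋯ + a_m t^m has degree m, then N(f) = (−1)^{m(p^e−1)} a_m^{p^e} x^m + (lower order terms in x); in particular deg_x N(f) = m and the leading coefficient of N(f) is (−1)^{m(p^e−1)} a_m^{p^e}. -/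
section Helpers

open Polynomial

theorem aux_det_const {A : Type*} [CommRing A] {n : ℕ} (φ : A →+* DualNumber A)
    (hφ : ∀ a, (φ a).fst = a) (M T : Matrix (Fin n) (Fin n) A)
    (h : ∀ i j, (φ (M i j)).snd = (T * M - M * T) i j) : (φ M.det).snd = 0 := by
  let inl : A →+* DualNumber A := TrivSqZeroExt.inlHom A A
  let ε : DualNumber A := DualNumber.eps
  have hε : ε * ε = 0 := DualNumber.eps_mul_eps
  let M' := M.map inl
  let T' := T.map inl
  have key : M.map φ = (1 + ε • T') * M' * (1 - ε • T') := by
    have h1 : (1 + ε • T') * M' * (1 - ε • T') = M' + ε • (T' * M' - M' * T') := by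
      simp only [add_mul, mul_sub, mul_one, one_mul, smul_mul_assoc, mul_smul_comm, smul_smul, hε,
        zero_smul, add_zero, smul_sub, smul_add]
      abel
    have h2 : T' * M' - M' * T' = (T * M - M * T).map inl := by
      rw [Matrix.map_sub _ (by simp), Matrix.map_mul, Matrix.map_mul]
    rw [h1, h2]
    ext i j
    · simp [M', inl, ε, hφ]
    · simp [M', inl, ε, h]
  have h3 : φ M.det = inl M.det := by
    rw [RingHom.map_det, RingHom.map_det, RingHom.mapMatrix_apply, RingHom.mapMatrix_apply, key,
      Matrix.det_mul, Matrix.det_mul, mul_right_comm, ← Matrix.det_mul]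
    have : (1 + ε • T') * (1 - ε • T') = 1 := by
      simp only [add_mul, mul_sub, mul_one, one_mul, smul_mul_assoc, mul_smul_comm, smul_smul, hε,
        zero_smul, smul_add, add_zero]
      abel
    rw [this]; simp [M']
  rw [h3]; simp [inl]

/-- coefficientwise derivation as a hom to dual numbers -/
theorem aux_phi {K : Type*} [Field K] (δ : K → K)
    (hadd : ∀ a b : K, δ (a + b) = δ a + δ b)
    (hleibniz : ∀ a b : K, δ (a * b) = a * δ b + δ a * b) :
    ∃ φ : K[X] →+* DualNumber K[X], (∀ a, (φ a).fst = a) ∧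
      ∀ a k, (φ a).snd.coeff k = δ (a.coeff k) := by
  have h0 : δ 0 = 0 := by simpa using hadd 0 0
  have h1 : δ 1 = 0 := by simpa using hleibniz 1 1
  let φ0 : K →+* DualNumber K[X] :=
    { toFun := fun a => (TrivSqZeroExt.inl (C a) + TrivSqZeroExt.inr (C (δ a)) : TrivSqZeroExt K[X] K[X])
      map_one' := by ext <;> simp [h1]
      map_zero' := by ext <;> simp [h0]
      map_add' := by intro a b; ext <;> simp [hadd]
      map_mul' := by
        intro a b
        ext <;> simp [hleibniz] }
  have hX : ∀ k, (eval₂RingHom φ0 (TrivSqZeroExt.inl X)) (X ^ k) = TrivSqZeroExt.inl (X ^ k) := by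
    intro k; simp
  refine ⟨eval₂RingHom φ0 (TrivSqZeroExt.inl X), ?_, ?_⟩
  · intro a
    induction a using Polynomial.induction_on' with
    | add p q hp hq => rw [map_add, TrivSqZeroExt.fst_add, hp, hq]
    | monomial n a =>
      rw [← C_mul_X_pow_eq_monomial, map_mul, hX]
      simp [φ0]
  · intro a k
    induction a using Polynomial.induction_on' with
    | add p q hp hq => rw [map_add, TrivSqZeroExt.snd_add, coeff_add, hp, hq, coeff_add, hadd]
    | monomial n a =>
      rw [← C_mul_X_pow_eq_monomial, map_mul, hX]
      simp [φ0, coeff_X_pow]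
      split_ifs <;> simp [h0]

/-- determinant with degree bounds -/
theorem aux_coeff_det {K : Type*} [Field K] {n : ℕ} (B : Matrix (Fin n) (Fin n) K[X]) (d : ℕ)
    (hB : ∀ i j, (B i j).natDegree ≤ d) :
    B.det.natDegree ≤ n * d ∧ B.det.coeff (n * d) = (B.map (fun q => q.coeff d)).det := by
  constructor
  · rw [Matrix.det_apply]
    refine natDegree_sum_le_of_forall_le _ _ fun σ _ => ?_
    refine (natDegree_smul_le _ _).trans ?_
    refine (natDegree_prod_le _ _).trans ?_
    refine (Finset.sum_le_card_nsmul _ _ d fun i _ => hB _ _).trans ?_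
    simp
  · rw [Matrix.det_apply, Matrix.det_apply, finsetSum_coeff]
    refine Finset.sum_congr rfl fun σ _ => ?_
    rw [coeff_smul]
    congr 1
    have := coeff_prod_of_natDegree_le Finset.univ (fun i => B (σ i) i) d (fun i _ => hB _ _)
    simpa using this

/-- norm degree from entry bounds -/
theorem aux_det_degree {K : Type*} [Field K] {n : ℕ} (M : Matrix (Fin n) (Fin n) K[X]) (m : ℕ)
    (a : K) (hn : 0 < n)
    (h0 : ∀ (i j : Fin n) (k : ℕ), m + (i : ℕ) < n * k + (j : ℕ) → (M i j).coeff k = 0)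
    (h1 : ∀ (i j : Fin n) (k : ℕ), n * k + (j : ℕ) = m + (i : ℕ) → (M i j).coeff k = a)
    (hodd : Odd n ∨ (-1 : K) = 1) :
    M.det.natDegree ≤ m ∧ M.det.coeff m = a ^ n := by
  have : NeZero n := ⟨hn.ne'⟩
  let B : Matrix (Fin n) (Fin n) K[X] := fun i j => X ^ (n - 1 - (i : ℕ)) * (expand K n (M i j) * X ^ (j : ℕ))
  have hcoef : ∀ i j l, (B i j).coeff l = if (n - 1 - (i : ℕ)) ≤ l ∧ (j : ℕ) ≤ l - (n - 1 - (i : ℕ)) ∧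
      n ∣ l - (n - 1 - (i : ℕ)) - j then (M i j).coeff ((l - (n - 1 - (i : ℕ)) - j) / n) else 0 := by
    intro i j l
    simp only [B, coeff_X_pow_mul', coeff_mul_X_pow', coeff_expand hn]
    split_ifs <;> first | rfl | (exfalso; tauto)
  have hBdeg : ∀ i j, (B i j).natDegree ≤ m + (n - 1) := by
    intro i j
    rw [natDegree_le_iff_coeff_eq_zero]
    intro l hl
    rw [hcoef]
    split_ifs with h
    · obtain ⟨h2, h3, k, hk⟩ := h
      rw [hk, Nat.mul_div_cancel_left _ hn]
      apply h0
      have := i.2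
      omega
    · rfl
  obtain ⟨hd1, hd2⟩ := aux_coeff_det B _ hBdeg
  have hBdet : B.det = expand K n M.det * X ^ (n * (n - 1)) := by
    have e1 : B.det = (∏ i : Fin n, X ^ (n - 1 - (i : ℕ))) *
        ((∏ j : Fin n, X ^ (j : ℕ)) * (M.map (expand K n)).det) := by
      rw [← Matrix.det_mul_row, ← Matrix.det_mul_column]
      congr 1
      ext1 i j
      simp [B]; ring
    have e2 : (M.map (expand K n)).det = expand K n M.det := by
      rw [AlgHom.map_det]; rfl
    rw [e1, e2, ← mul_assoc, ← Finset.prod_mul_distrib]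
    have : ∀ i : Fin n, (X : K[X]) ^ (n - 1 - (i : ℕ)) * X ^ (i : ℕ) = X ^ (n - 1) := by
      intro i
      rw [← pow_add]; congr 1; have := i.2; omega
    simp only [this]
    rw [Finset.prod_const, Finset.card_univ, Fintype.card_fin, ← pow_mul, mul_comm, mul_comm n]
  have hc : ∀ l, B.det.coeff (n * (l + (n - 1))) = M.det.coeff l := by
    intro l
    rw [hBdet, mul_add, coeff_mul_X_pow, mul_comm, coeff_expand_mul hn]
  constructor
  · rw [natDegree_le_iff_coeff_eq_zero]
    intro l hl
    rw [← hc]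
    apply coeff_eq_zero_of_natDegree_lt
    refine hd1.trans_lt ?_
    exact Nat.mul_lt_mul_of_pos_left (by omega) hn
  · rw [← hc, hd2]
    let σ : Equiv.Perm (Fin n) := Equiv.addRight (Fin.ofNat n m)
    have hσv : ∀ i, ((σ i : Fin n) : ℕ) = (i + m) % n := by
      intro i; simp [σ, Fin.val_add]
    have hmat : B.map (fun q => q.coeff (m + (n - 1))) = a • (σ.permMatrix K) := by
      ext i j
      rw [Matrix.map_apply, hcoef, Matrix.smul_apply, Equiv.Perm.permMatrix, PEquiv.toMatrix_apply]
      simp only [Equiv.toPEquiv_apply, Option.mem_some_iff, smul_eq_mul, mul_ite, mul_one, mul_zero]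
      have hi := i.2
      have hj := j.2
      by_cases hh : σ i = j
      · rw [if_pos hh]
        have hv := hσv i
        rw [hh] at hv
        have hdm := Nat.mod_add_div (i + m) n
        rw [← hv] at hdm
        have e3 : m + (n - 1) - (n - 1 - (i : ℕ)) - j = n * ((i + m) / n) := by omega
        rw [if_pos ⟨by omega, by omega, e3 ▸ dvd_mul_right _ _⟩, e3, Nat.mul_div_cancel_left _ hn]
        apply h1
        omega
      · rw [if_neg hh, if_neg]
        rintro ⟨h2, h3, k, hk⟩
        apply hh
        apply Fin.ext
        rw [hσv]
        have : (i : ℕ) + m = j + n * k := by omega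
        rw [this, Nat.add_mul_mod_self_left, Nat.mod_eq_of_lt hj]
    rw [hmat, Matrix.det_smul, Fintype.card_fin, Matrix.det_permutation]
    have hs : ((Equiv.Perm.sign σ : ℤ) : K) = 1 := by
      rcases hodd with ho | ho
      · have hpow : σ ^ n = 1 := by
          have : ∀ k : ℕ, σ ^ k = Equiv.addRight (k • (Fin.ofNat n m)) := by
            intro k
            simp [σ]
          rw [this]
          have h5 : n • (Fin.ofNat n m) = 0 := by
            have := card_nsmul_eq_zero (x := Fin.ofNat n m)
            simpa using this
          rw [h5]; ext; simp
        have h6 : (Equiv.Perm.sign σ) ^ n = 1 := by rw [← map_pow, hpow, map_one]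
        have h7 : Equiv.Perm.sign σ = 1 := by
          rcases Int.units_eq_one_or (Equiv.Perm.sign σ) with h | h
          · exact h
          · rw [h, ho.neg_one_pow] at h6
            rw [h, h6]
        simp [h7]
      · rcases Int.units_eq_one_or (Equiv.Perm.sign σ) with h | h
        · simp [h]
        · simp [h, ho]
    rw [hs, mul_one]

section RingPart

variable {K R : Type} [Field K] [Ring R]

theorem aux_coeff_smul (ι : K →+* R) (t : R) (coeff : R →+ (ℕ →₀ K))
    (hcoeff : ∀ (a : K) (i : ℕ), coeff (ι a * t ^ i) = Finsupp.single i a)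
    (hrepr : ∀ x : R, (coeff x).sum (fun i a => ι a * t ^ i) = x) (a : K) (y : R) (i : ℕ) :
    coeff (ι a * y) i = a * coeff y i := by
  conv_lhs => rw [← hrepr y]
  rw [Finsupp.sum, Finset.mul_sum, map_sum, Finsupp.finsetSum_apply]
  simp only [← mul_assoc, ← map_mul, hcoeff, Finsupp.single_apply]
  rw [Finset.sum_ite_eq']
  split_ifs with h
  · rfl
  · rw [Finsupp.notMem_support_iff.mp h, mul_zero]

theorem aux_coeff_t_mul (δ : K → K) (h0 : δ 0 = 0) (ι : K →+* R) (t : R)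
    (hmul : ∀ a : K, t * ι a = ι a * t + ι (δ a)) (coeff : R →+ (ℕ →₀ K))
    (hcoeff : ∀ (a : K) (i : ℕ), coeff (ι a * t ^ i) = Finsupp.single i a)
    (hrepr : ∀ x : R, (coeff x).sum (fun i a => ι a * t ^ i) = x) (y : R) (i : ℕ) :
    coeff (t * y) (i + 1) = coeff y i + δ (coeff y (i + 1)) := by
  conv_lhs => rw [← hrepr y]
  rw [Finsupp.sum, Finset.mul_sum, map_sum, Finsupp.finsetSum_apply]
  simp only [← mul_assoc, hmul, add_mul, map_add]
  simp only [mul_assoc, ← pow_succ', hcoeff, Finsupp.single_apply, Finsupp.add_apply]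
  rw [Finset.sum_add_distrib]
  simp only [add_left_inj]
  rw [Finset.sum_ite_eq', Finset.sum_ite_eq']
  congr 1
  · split_ifs with h
    · rfl
    · rw [Finsupp.notMem_support_iff.mp h]
  · split_ifs with h
    · rfl
    · rw [Finsupp.notMem_support_iff.mp h, h0]

/-- `y` has degree at most `d` with coefficient `a` at `d`. -/
def AuxDeg (coeff : R →+ (ℕ →₀ K)) (y : R) (d : ℕ) (a : K) : Prop :=
  coeff y d = a ∧ ∀ i, d < i → coeff y i = 0

theorem aux_deg_tpow_mul (δ : K → K) (h0 : δ 0 = 0) (ι : K →+* R) (t : R)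
    (hmul : ∀ a : K, t * ι a = ι a * t + ι (δ a)) (coeff : R →+ (ℕ →₀ K))
    (hcoeff : ∀ (a : K) (i : ℕ), coeff (ι a * t ^ i) = Finsupp.single i a)
    (hrepr : ∀ x : R, (coeff x).sum (fun i a => ι a * t ^ i) = x) (y : R) (d : ℕ) (a : K)
    (h : AuxDeg coeff y d a) (k : ℕ) : AuxDeg coeff (t ^ k * y) (d + k) a := by
  induction k with
  | zero => simpa using h
  | succ k ih =>
    rw [pow_succ', mul_assoc, ← add_assoc]
    constructor
    · rw [aux_coeff_t_mul δ h0 ι t hmul coeff hcoeff hrepr, ih.1, ih.2 _ (by omega), h0, add_zero]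
    · intro i hi
      obtain ⟨i, rfl⟩ : ∃ j, i = j + 1 := ⟨i - 1, by omega⟩
      rw [aux_coeff_t_mul δ h0 ι t hmul coeff hcoeff hrepr, ih.2 _ (by omega), ih.2 _ (by omega),
        h0, add_zero]

theorem aux_deg_mul (δ : K → K) (h0 : δ 0 = 0) (ι : K →+* R) (t : R)
    (hmul : ∀ a : K, t * ι a = ι a * t + ι (δ a)) (coeff : R →+ (ℕ →₀ K))
    (hcoeff : ∀ (a : K) (i : ℕ), coeff (ι a * t ^ i) = Finsupp.single i a)
    (hrepr : ∀ x : R, (coeff x).sum (fun i a => ι a * t ^ i) = x) (y z : R) (d d' : ℕ) (a b : K)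
    (hy : AuxDeg coeff y d a) (hz : AuxDeg coeff z d' b) :
    AuxDeg coeff (y * z) (d + d') (a * b) := by
  have hT := aux_deg_tpow_mul δ h0 ι t hmul coeff hcoeff hrepr z d' b hz
  have hsupp : ∀ k ∈ (coeff y).support, k ≤ d := by
    intro k hk
    by_contra hlt
    exact (Finsupp.mem_support_iff.mp hk) (hy.2 k (by omega))
  have hyz : ∀ i, coeff (y * z) i = ∑ k ∈ (coeff y).support, coeff y k * coeff (t ^ k * z) i := by
    intro i
    conv_lhs => rw [← hrepr y]
    rw [Finsupp.sum, Finset.sum_mul, map_sum, Finsupp.finsetSum_apply]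
    simp only [mul_assoc, aux_coeff_smul ι t coeff hcoeff hrepr]
  constructor
  · rw [hyz, Finset.sum_eq_single d]
    · have := (hT d).1
      rw [add_comm d', ] at this
      rw [this, hy.1]
    · intro k hk hkd
      have := hsupp k hk
      rw [(hT k).2 _ (by omega), mul_zero]
    · intro hk
      rw [Finsupp.notMem_support_iff.mp hk, zero_mul]
  · intro i hi
    rw [hyz]
    refine Finset.sum_eq_zero fun k hk => ?_
    have := hsupp k hk
    rw [(hT k).2 _ (by omega), mul_zero]

theorem aux_no_zero_div (δ : K → K) (h0 : δ 0 = 0) (ι : K →+* R) (t : R)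
    (hmul : ∀ a : K, t * ι a = ι a * t + ι (δ a)) (coeff : R →+ (ℕ →₀ K))
    (hcoeff : ∀ (a : K) (i : ℕ), coeff (ι a * t ^ i) = Finsupp.single i a)
    (hrepr : ∀ x : R, (coeff x).sum (fun i a => ι a * t ^ i) = x) (w f : R) (m : ℕ) (a : K)
    (ha : a ≠ 0) (hf : AuxDeg coeff f m a) (hwf : w * f = 0) : w = 0 := by
  by_contra hw
  have hne : (coeff w).support.Nonempty := by
    rw [Finset.nonempty_iff_ne_empty]
    intro he
    apply hw
    rw [← hrepr w, Finsupp.sum, he, Finset.sum_empty]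
  set d := (coeff w).support.max' hne with hd
  have hdm : coeff w d ≠ 0 := Finsupp.mem_support_iff.mp (Finset.max'_mem _ hne)
  have hD : AuxDeg coeff w d (coeff w d) := by
    refine ⟨rfl, fun i hi => ?_⟩
    by_contra hh
    have := Finset.le_max' _ _ (Finsupp.mem_support_iff.mpr hh)
    omega
  have := (aux_deg_mul δ h0 ι t hmul coeff hcoeff hrepr w f d m _ _ hD hf).1
  rw [hwf] at this
  simp only [map_zero, Finsupp.coe_zero, Pi.zero_apply] at this
  exact mul_ne_zero hdm ha this.symm

/-- degree bounds for expansions in the basis `x^k t^j` -/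
theorem aux_expand (ι : K →+* R) (t x : R) (coeff : R →+ (ℕ →₀ K))
    (hcoeff : ∀ (a : K) (i : ℕ), coeff (ι a * t ^ i) = Finsupp.single i a)
    (hrepr : ∀ x : R, (coeff x).sum (fun i a => ι a * t ^ i) = x) (n : ℕ)
    (hb : ∀ k j, AuxDeg coeff (x ^ k * t ^ j) (n * k + j) 1)
    (P : Fin n → K[X]) (d : ℕ) (a : K)
    (hP : AuxDeg coeff (∑ j : Fin n, ((P j).eval₂ ι x) * t ^ (j : ℕ)) d a) :
    (∀ (j : Fin n) k, d < n * k + (j : ℕ) → (P j).coeff k = 0) ∧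
    (∀ (j : Fin n) k, n * k + (j : ℕ) = d → (P j).coeff k = a) := by
  obtain ⟨M, hM⟩ : ∃ M, ∀ j, (P j).natDegree < M :=
    ⟨∑ j, (P j).natDegree + 1, fun j => by
      have := Finset.single_le_sum (f := fun j => (P j).natDegree) (fun _ _ => Nat.zero_le _)
        (Finset.mem_univ j)
      omega⟩
  have hc : ∀ i, coeff (∑ j : Fin n, ((P j).eval₂ ι x) * t ^ (j : ℕ)) i =
      ∑ j : Fin n, ∑ k ∈ Finset.range M, (P j).coeff k * coeff (x ^ k * t ^ (j : ℕ)) i := by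
    intro i
    rw [map_sum, Finsupp.finsetSum_apply]
    refine Finset.sum_congr rfl fun j _ => ?_
    rw [eval₂_eq_sum_range' ι (hM j), Finset.sum_mul, map_sum, Finsupp.finsetSum_apply]
    simp only [mul_assoc, aux_coeff_smul ι t coeff hcoeff hrepr]
  -- top coefficient extraction
  have htop : ∀ D, (∀ (j : Fin n) k, D < n * k + (j : ℕ) → (P j).coeff k = 0) →
      ∀ (j : Fin n) k, n * k + (j : ℕ) = D →
        coeff (∑ j : Fin n, ((P j).eval₂ ι x) * t ^ (j : ℕ)) D = (P j).coeff k := by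
    intro D hD j k hjk
    have hterm : ∀ (j' : Fin n) k', n * k' + (j' : ℕ) ≠ D →
        (P j').coeff k' * coeff (x ^ k' * t ^ (j' : ℕ)) D = 0 := by
      intro j' k' hne
      rcases lt_or_gt_of_ne hne with h | h
      · rw [(hb k' j').2 _ h, mul_zero]
      · rw [hD _ _ h, zero_mul]
    have huniq : ∀ (j' : Fin n) k', n * k' + (j' : ℕ) = D → j' = j ∧ k' = k := by
      intro j' k' h'
      have h1 := j.2
      have h2 := j'.2
      have e1 : (j' : ℕ) = j := by
        have := congrArg (· % n) (h'.trans hjk.symm)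
        simpa [Nat.mul_add_mod, Nat.mod_eq_of_lt h1, Nat.mod_eq_of_lt h2] using this
      refine ⟨Fin.ext e1, ?_⟩
      have : n * k' = n * k := by omega
      exact Nat.eq_of_mul_eq_mul_left (by omega) this
    rw [hc, Finset.sum_eq_single j, Finset.sum_eq_single k]
    · rw [← hjk, (hb k j).1, mul_one]
    · intro k' _ hk'
      exact hterm _ _ fun h => hk' (huniq _ _ h).2
    · intro hk
      have : (P j).coeff k = 0 := by
        apply coeff_eq_zero_of_natDegree_lt
        have := hM j
        simp at hk
        omega
      rw [this, zero_mul]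
    · intro j' _ hj'
      exact Finset.sum_eq_zero fun k' _ => hterm _ _ fun h => hj' (huniq _ _ h).1
    · intro h; exact absurd (Finset.mem_univ _) h
  have hvan : ∀ D, (∀ (j : Fin n) k, d + D < n * k + (j : ℕ) → (P j).coeff k = 0) →
      (∀ (j : Fin n) k, d < n * k + (j : ℕ) → (P j).coeff k = 0) := by
    intro D
    induction D with
    | zero => intro h; simpa using h
    | succ D ih =>
      intro h
      apply ih
      intro j k hjk
      by_cases he : n * k + (j : ℕ) = d + (D + 1)
      · rw [← htop _ h j k he]
        exact hP.2 _ (by omega)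
      · exact h _ _ (by omega)
  have h1 := hvan (n * M + n) (by
    intro j k hjk
    apply coeff_eq_zero_of_natDegree_lt
    refine (hM j).trans ?_
    by_contra hh
    have h2 : n * k ≤ n * M := Nat.mul_le_mul_left _ (by omega)
    have := j.2
    omega)
  exact ⟨h1, fun j k hjk => by rw [← htop d h1 j k hjk, hP.1]⟩

theorem aux_expand_unique (ι : K →+* R) (t x : R) (coeff : R →+ (ℕ →₀ K))
    (hcoeff : ∀ (a : K) (i : ℕ), coeff (ι a * t ^ i) = Finsupp.single i a)
    (hrepr : ∀ x : R, (coeff x).sum (fun i a => ι a * t ^ i) = x) (n : ℕ)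
    (hb : ∀ k j, AuxDeg coeff (x ^ k * t ^ j) (n * k + j) 1)
    (P Q : Fin n → K[X])
    (hPQ : ∑ j : Fin n, ((P j).eval₂ ι x) * t ^ (j : ℕ) =
      ∑ j : Fin n, ((Q j).eval₂ ι x) * t ^ (j : ℕ)) : P = Q := by
  have hz : ∑ j : Fin n, (((P - Q) j).eval₂ ι x) * t ^ (j : ℕ) = 0 := by
    simp only [Pi.sub_apply, eval₂_sub, sub_mul, Finset.sum_sub_distrib, hPQ, sub_self]
  obtain ⟨h1, h2⟩ := aux_expand ι t x coeff hcoeff hrepr n hb (P - Q) 0 0 (by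
    rw [hz]; constructor <;> simp)
  funext j
  rw [← sub_eq_zero]
  ext k
  rcases Nat.eq_zero_or_pos (n * k + j) with h | h
  · simpa using h2 j k h
  · simpa using h1 j k h

theorem aux_tpow_comm (p : ℕ) [Fact p.Prime] [CharP R p] (δ : K → K) (ι : K →+* R) (t : R)
    (hmul : ∀ a : K, t * ι a = ι a * t + ι (δ a)) (k : ℕ) (a : K) :
    t ^ (p ^ k) * ι a = ι a * t ^ (p ^ k) + ι (δ^[p ^ k] a) := by
  have hch : CharP (Module.End ℤ R) p :=
    charP_of_injective_ringHom (f := (Algebra.lmul ℤ R).toRingHom)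
      (by intro a b h; simpa using congrArg (fun φ : Module.End ℤ R => φ 1) h) p
  have hcomm : Commute (LinearMap.mulLeft ℤ t) (LinearMap.mulRight ℤ t) :=
    LinearMap.commute_mulLeft_right t t
  have h1 := sub_pow_char_pow_of_commute p k hcomm
  have h2 : ∀ m : ℕ, ((LinearMap.mulLeft ℤ t - LinearMap.mulRight ℤ t) ^ m) (ι a) = ι (δ^[m] a) := by
    intro m
    induction m with
    | zero => simp
    | succ m ih =>
      rw [pow_succ', Module.End.mul_apply, ih, Function.iterate_succ_apply']
      simp [hmul]
  have h3 := h2 (p ^ k)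
  rw [h1, LinearMap.sub_apply, LinearMap.pow_mulLeft, LinearMap.pow_mulRight] at h3
  simp only [LinearMap.mulLeft_apply, LinearMap.mulRight_apply] at h3
  rw [← h3]; abel

end RingPart

end Helpers


/-- In `R = K[t;δ]` with `δ` algebraic with minimum `p`-polynomial `g` of degree
`p^e` and `Const(δ) = F`: every `f ∈ R` divides its reduced norm: `N(f) ∈ F[x]`
(`x = g(t)`) and there is `f^♯ ∈ R` with `N(f) = f·f^♯ = f^♯·f`. Moreover if `f`
has degree `m` then `N(f)` has `x`-degree `m` with leading coefficient
`(−1)^{m(p^e−1)} a_m^{p^e}`. -/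
theorem differential_polynomial_divides_norm_and_leading_term
    (p : ℕ) [Fact p.Prime] (F K : Type) [Field F] [Field K] [Algebra F K]
    [CharP F p]
    (hinsep : ∀ x : K, x ^ p ∈ (algebraMap F K).range)
    (e : ℕ) (hdim : Module.finrank F K = p ^ e)
    (δ : K → K)
    (hadd : ∀ a b : K, δ (a + b) = δ a + δ b)
    (hleibniz : ∀ a b : K, δ (a * b) = a * δ b + δ a * b)
    (hconst : ∀ x : K, δ x = 0 ↔ x ∈ (algebraMap F K).range)
    (c : ℕ → F)
    (hg : ∀ x : K, δ^[p ^ e] x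
      + ∑ i ∈ Finset.range e, algebraMap F K (c i) * δ^[p ^ (e - 1 - i)] x = 0)
    (R : Type) [Ring R] (ι : K →+* R) (t : R)
    (hmul : ∀ a : K, t * ι a = ι a * t + ι (δ a))
    (coeff : R →+ (ℕ →₀ K))
    (hcoeff : ∀ (a : K) (i : ℕ), coeff (ι a * t ^ i) = Finsupp.single i a)
    (hrepr : ∀ x : R, (coeff x).sum (fun i a => ι a * t ^ i) = x)
    (xR : R) (hxR : xR = t ^ (p ^ e)
      + ∑ i ∈ Finset.range e, ι (algebraMap F K (c i)) * t ^ (p ^ (e - 1 - i)))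
    -- the left regular representation wrt the K(x)-basis 1, t, …, t^{p^e−1}
    -- and the reduced norm N = det ∘ ρ:
    (ρ : R → Matrix (Fin (p ^ e)) (Fin (p ^ e)) (Polynomial K))
    (hρ : ∀ (g : R) (i : Fin (p ^ e)), t ^ (i : ℕ) * g =
      ∑ j : Fin (p ^ e), ((ρ g i j).sum fun k a => ι a * xR ^ k) * t ^ (j : ℕ))
    (N : R → Polynomial K) (hN : ∀ g : R, N g = (ρ g).det)
    (f : R) (m : ℕ) (hdeg : coeff f m ≠ 0 ∧ ∀ i : ℕ, m < i → coeff f i = 0) :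
    (∀ k : ℕ, (N f).coeff k ∈ (algebraMap F K).range) ∧
    (∃ fsharp : R,
      ((N f).sum fun k a => ι a * xR ^ k) = f * fsharp ∧
      ((N f).sum fun k a => ι a * xR ^ k) = fsharp * f) ∧
    (N f).natDegree = m ∧
    (N f).coeff m = (-1) ^ (m * (p ^ e - 1)) * (coeff f m) ^ (p ^ e) := by
  have h0 : δ 0 = 0 := by simpa using hadd 0 0
  have hp : p.Prime := Fact.out
  have hn : 0 < p ^ e := pow_pos hp.pos e
  -- characteristic
  have hKp : CharP K p := charP_of_injective_algebraMap (algebraMap F K).injective p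
  have hιinj : Function.Injective ι := by
    intro a b hab
    have h1 := hcoeff a 0
    rw [hab, hcoeff b 0] at h1
    exact (Finsupp.single_injective 0 h1).symm
  have hRp : CharP R p := charP_of_injective_ringHom hιinj p
  -- centrality of xR
  have hδF : ∀ c : F, δ (algebraMap F K c) = 0 := fun c => (hconst _).2 ⟨c, rfl⟩
  have htF : ∀ c : F, t * ι (algebraMap F K c) = ι (algebraMap F K c) * t := by
    intro c; rw [hmul, hδF, map_zero, add_zero]
  have hxι : ∀ a : K, Commute (ι a) xR := by
    intro a
    have h1 : xR * ι a = ι a * xR + ι (δ^[p ^ e] a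
      + ∑ i ∈ Finset.range e, algebraMap F K (c i) * δ^[p ^ (e - 1 - i)] a) := by
      rw [hxR, add_mul, mul_add, aux_tpow_comm p δ ι t hmul, Finset.sum_mul, Finset.mul_sum,
        map_add, map_sum]
      have h2 : ∀ i ∈ Finset.range e,
          ι (algebraMap F K (c i)) * t ^ (p ^ (e - 1 - i)) * ι a =
          ι a * (ι (algebraMap F K (c i)) * t ^ (p ^ (e - 1 - i))) +
            ι (algebraMap F K (c i) * δ^[p ^ (e - 1 - i)] a) := by
        intro i _
        rw [mul_assoc, aux_tpow_comm p δ ι t hmul, mul_add, ← mul_assoc, ← mul_assoc, ← map_mul,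
          ← map_mul, ← map_mul, mul_comm a]
      rw [Finset.sum_congr rfl h2, Finset.sum_add_distrib]
      abel
    rw [hg, map_zero, add_zero] at h1
    exact h1.symm
  have hxt : Commute t xR := by
    rw [hxR]
    refine Commute.add_right (Commute.pow_right (Commute.refl t) _) ?_
    refine Commute.sum_right _ _ _ fun i _ => ?_
    exact Commute.mul_right (htF _) (Commute.pow_right (Commute.refl t) _)
  -- degrees
  have hdm := aux_deg_mul δ h0 ι t hmul coeff hcoeff hrepr
  have hdt : ∀ j : ℕ, AuxDeg coeff (t ^ j) j 1 := by
    intro j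
    have h1 := hcoeff 1 j
    rw [map_one, one_mul] at h1
    refine ⟨by rw [h1]; simp, fun i hi => ?_⟩
    rw [h1, Finsupp.single_apply, if_neg (by omega)]
  have hdx : AuxDeg coeff xR (p ^ e) 1 := by
    have h1 : ∀ i, p ^ e ≤ i → coeff xR i = coeff (t ^ (p ^ e)) i := by
      intro i hi
      rw [hxR, map_add, map_sum, Finsupp.add_apply, Finsupp.finsetSum_apply, Finset.sum_eq_zero,
        add_zero]
      intro l hl
      have hl' := Finset.mem_range.mp hl
      have h2 : p ^ (e - 1 - l) < p ^ e := Nat.pow_lt_pow_right hp.one_lt (by omega)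
      rw [hcoeff, Finsupp.single_apply, if_neg (by omega)]
    exact ⟨by rw [h1 _ le_rfl, (hdt _).1], fun i hi => by rw [h1 _ hi.le, (hdt _).2 _ hi]⟩
  have hdxk : ∀ k : ℕ, AuxDeg coeff (xR ^ k) (p ^ e * k) 1 := by
    intro k
    induction k with
    | zero => simpa using hdt 0
    | succ k ih =>
      have := hdm _ _ _ _ _ _ ih hdx
      rwa [← pow_succ, ← mul_add_one, mul_one] at this
  have hb : ∀ k j, AuxDeg coeff (xR ^ k * t ^ j) (p ^ e * k + j) 1 := by
    intro k j
    have := hdm _ _ _ _ _ _ (hdxk k) (hdt j)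
    rwa [mul_one] at this
  -- evaluation hom
  let ev : Polynomial K →+* R := Polynomial.eval₂RingHom' ι xR hxι
  have hev : ∀ P : Polynomial K, (P.sum fun k a => ι a * xR ^ k) = ev P := by
    intro P; exact (Polynomial.eval₂_eq_sum).symm
  have hev' : ∀ P : Polynomial K, P.eval₂ ι xR = ev P := fun P => rfl
  have hρ' : ∀ (g : R) (i : Fin (p ^ e)), t ^ (i : ℕ) * g =
      ∑ j : Fin (p ^ e), ev (ρ g i j) * t ^ (j : ℕ) := by
    intro g i
    rw [hρ g i]
    simp only [hev]
  have huniq := aux_expand_unique ι t xR coeff hcoeff hrepr (p ^ e) hb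
  simp only [hev'] at huniq
  obtain ⟨φ, hφ1, hφ2⟩ := aux_phi δ hadd hleibniz
  -- commutation of t with polynomials in x
  have htev : ∀ P : Polynomial K, t * ev P = ev P * t + ev (φ P).snd := by
    intro P
    induction P using Polynomial.induction_on' with
    | add P Q hP hQ =>
      rw [map_add, map_add, mul_add, hP, hQ, TrivSqZeroExt.snd_add, map_add]
      noncomm_ring
    | monomial n a =>
      have h1 : (φ (Polynomial.monomial n a)).snd = Polynomial.monomial n (δ a) := by
        ext k
        rw [hφ2, Polynomial.coeff_monomial, Polynomial.coeff_monomial]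
        split_ifs <;> simp [h0]
      have h2 : ∀ b : K, ev (Polynomial.monomial n b) = ι b * xR ^ n := fun b =>
        Polynomial.eval₂_monomial _ _
      rw [h1, h2, h2, ← mul_assoc, hmul, add_mul, mul_assoc, mul_assoc, (hxt.pow_right n).eq]
  -- product with rows
  have hrow : ∀ (v : Fin (p ^ e) → Polynomial K) (g : R),
      (∑ j, ev (v j) * t ^ (j : ℕ)) * g =
        ∑ k, ev (∑ j, v j * ρ g j k) * t ^ (k : ℕ) := by
    intro v g
    rw [Finset.sum_mul]
    simp only [mul_assoc, hρ', Finset.mul_sum, map_sum, map_mul, Finset.sum_mul]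
    rw [Finset.sum_comm]
  have hcomm : ∀ i j, (φ (ρ f i j)).snd = (ρ t * ρ f - ρ f * ρ t) i j := by
    intro i
    have h1 : (fun k => (ρ t * ρ f) i k) = fun k => (ρ f * ρ t) i k + (φ (ρ f i k)).snd := by
      apply huniq
      simp only [Matrix.mul_apply, map_add, add_mul, Finset.sum_add_distrib]
      rw [← hrow (fun j => ρ t i j) f, ← hρ', ← hrow (fun j => ρ f i j) t, ← hρ',
        ← pow_succ, pow_succ', mul_assoc, hρ', Finset.mul_sum, Finset.sum_mul,
        ← Finset.sum_add_distrib]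
      refine Finset.sum_congr rfl fun j _ => ?_
      rw [← mul_assoc, htev, add_mul, mul_assoc, mul_assoc, ← pow_succ, ← pow_succ']
    intro j
    have h2 : (ρ t * ρ f) i j = (ρ f * ρ t) i j + (φ (ρ f i j)).snd := congrFun h1 j
    rw [Matrix.sub_apply, h2]
    ring
  have hdet0 : (φ (N f)).snd = 0 := by
    rw [hN]
    exact aux_det_const φ hφ1 (ρ f) (ρ t) hcomm
  have hδN : ∀ k, δ ((N f).coeff k) = 0 := by
    intro k
    rw [← hφ2, hdet0, Polynomial.coeff_zero]
  have hNF : ∀ k : ℕ, (N f).coeff k ∈ (algebraMap F K).range := fun k => (hconst _).1 (hδN k)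
  -- N f is central
  have hNt : Commute t (ev (N f)) := by
    have := htev (N f)
    rwa [hdet0, map_zero, add_zero] at this
  have hNι : ∀ a, Commute (ι a) (ev (N f)) := by
    intro a
    have h1 : ι a = ev (Polynomial.C a) := (Polynomial.eval₂_C _ _).symm
    rw [h1, Commute, SemiconjBy, ← map_mul, ← map_mul, mul_comm]
  have hNc : ∀ y : R, Commute y (ev (N f)) := by
    intro y
    rw [← hrepr y]
    refine Commute.sum_left _ _ _ fun i _ => ?_
    exact (hNι _).mul_left (hNt.pow_left i)
  refine ⟨hNF, ?_, ?_⟩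
  · -- the cofactor
    let i0 : Fin (p ^ e) := ⟨0, hn⟩
    let h : R := ∑ j, ev ((ρ f).adjugate i0 j) * t ^ (j : ℕ)
    have hhf : h * f = ev (N f) := by
      change (∑ j, ev ((ρ f).adjugate i0 j) * t ^ (j : ℕ)) * f = _
      rw [hrow]
      have h1 : ∀ k, ∑ j, (ρ f).adjugate i0 j * ρ f j k = if i0 = k then N f else 0 := by
        intro k
        rw [← Matrix.mul_apply, Matrix.adjugate_mul, Matrix.smul_apply, Matrix.one_apply, hN]
        split_ifs <;> simp
      simp only [h1]
      rw [Finset.sum_eq_single i0]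
      · simp [i0]
      · intro k _ hk
        rw [if_neg (Ne.symm hk), map_zero, zero_mul]
      · intro hh; exact absurd (Finset.mem_univ _) hh
    refine ⟨h, ?_, ?_⟩
    · rw [hev]
      have h1 : (f * h - ev (N f)) * f = 0 := by
        rw [sub_mul, mul_assoc, hhf, (hNc f).eq, sub_self]
      have h2 := aux_no_zero_div δ h0 ι t hmul coeff hcoeff hrepr _ f m _ hdeg.1 ⟨rfl, hdeg.2⟩ h1
      exact (sub_eq_zero.mp h2).symm
    · rw [hev, hhf]
  · -- degrees
    have hent : ∀ i : Fin (p ^ e), _ := fun i =>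
      aux_expand ι t xR coeff hcoeff hrepr (p ^ e) hb (ρ f i) (m + i) (coeff f m) (by
        simp only [hev']
        rw [← hρ']
        exact aux_deg_tpow_mul δ h0 ι t hmul coeff hcoeff hrepr f m _ ⟨rfl, hdeg.2⟩ i)
    have hodd : Odd (p ^ e) ∨ (-1 : K) = 1 := by
      rcases hp.eq_two_or_odd' with h2 | h2
      · right
        subst h2
        exact CharTwo.neg_eq 1
      · left; exact h2.pow
    obtain ⟨hd1, hd2⟩ := aux_det_degree (ρ f) m (coeff f m) hn (fun i => (hent i).1)
      (fun i => (hent i).2) hodd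
    rw [← hN] at hd1 hd2
    have hsign : ((-1 : K)) ^ (m * (p ^ e - 1)) = 1 := by
      rcases hodd with h2 | h2
      · exact Even.neg_one_pow ((Nat.Odd.sub_odd h2 odd_one).mul_left m)
      · rw [h2, one_pow]
    refine ⟨le_antisymm hd1 ?_, by rw [hd2, hsign, one_mul]⟩
    apply Polynomial.le_natDegree_of_ne_zero
    rw [hd2]
    exact pow_ne_zero _ hdeg.1
end

section
/- Let R = K[t;δ] with δ an algebraic derivation of K, Const(δ) = F, minimum polynomial g of degree p^e, center F[x], x = g(t), and N the reduced norm of K(t;δ) over F(x). If f ∈ R has degree m, its minimal central left multiple ĥ ∈ F[x] has deg_x ĥ = m, and ĥ is irreducible in F[x], then f is irreducible in R; conversely, if f is irreducible (with deg ĥ = m) then N(f) is irreducible in F[x]. -/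
open Polynomial in
/-- The basic data of a differential polynomial ring, with left coefficients recorded
by an additive map to polynomials. -/
structure OreData {K R : Type} [Field K] [Ring R] (δ : K → K) (ι : K →+* R) (t : R)
    (φ : R →+ Polynomial K) : Prop where
  hδ : ∀ a b : K, δ (a + b) = δ a + δ b
  hmul : ∀ a : K, t * ι a = ι a * t + ι (δ a)
  hmon : ∀ (a : K) (i : ℕ), φ (ι a * t ^ i) = monomial i a
  hrepr : ∀ r : R, (φ r).sum (fun i a => ι a * t ^ i) = r

namespace OreData
open Polynomial

variable {K R : Type} [Field K] [Ring R] {δ : K → K} {ι : K →+* R} {t : R}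
  {φ : R →+ Polynomial K}

theorem ind (S : OreData δ ι t φ) {P : R → Prop} (h0 : P 0)
    (ha : ∀ r s, P r → P s → P (r + s)) (hm : ∀ a i, P (ι a * t ^ i)) (r : R) : P r := by
  rw [← S.hrepr r, Polynomial.sum]
  exact Finset.sum_induction _ P (fun a b => ha a b) h0 (fun i _ => hm _ _)

theorem inj (S : OreData δ ι t φ) : Function.Injective φ := by
  intro r s h
  rw [← S.hrepr r, h, S.hrepr]

theorem eq_zero (S : OreData δ ι t φ) {r : R} (h : φ r = 0) : r = 0 :=
  S.inj (by rw [h, map_zero])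

theorem ne_zero (S : OreData δ ι t φ) {r : R} (h : r ≠ 0) : φ r ≠ 0 :=
  fun h' => h (S.eq_zero h')

theorem φι (S : OreData δ ι t φ) (a : K) : φ (ι a) = C a := by
  have := S.hmon a 0
  simpa using this

theorem φone (S : OreData δ ι t φ) : φ 1 = 1 := by
  have := S.φι 1
  simpa using this

theorem φt (S : OreData δ ι t φ) (i : ℕ) : φ (t ^ i) = X ^ i := by
  have := S.hmon 1 i
  rw [map_one, one_mul] at this
  rw [this, X_pow_eq_monomial]

theorem φιmul (S : OreData δ ι t φ) (a : K) (r : R) : φ (ι a * r) = C a * φ r := by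
  refine S.ind (P := fun r => φ (ι a * r) = C a * φ r) (by simp) ?_ ?_ r
  · intro r s hr hs
    rw [mul_add, map_add, hr, hs, map_add, mul_add]
  · intro b i
    rw [← mul_assoc, ← map_mul, S.hmon, S.hmon, C_mul_monomial]

theorem δzero (S : OreData δ ι t φ) : δ 0 = 0 := by
  have := S.hδ 0 0
  simpa using this

theorem coeff_t (S : OreData δ ι t φ) (r : R) (i : ℕ) :
    (φ (t * r) - X * φ r).coeff i = δ ((φ r).coeff i) := by
  refine S.ind (P := fun r => (φ (t * r) - X * φ r).coeff i = δ ((φ r).coeff i))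
    (by simp [S.δzero]) ?_ ?_ r
  · intro r s hr hs
    rw [map_add, coeff_add, S.hδ, ← hr, ← hs, ← coeff_add, mul_add, map_add]
    congr 1
    ring
  · intro b j
    rw [← mul_assoc, S.hmul, add_mul, mul_assoc, ← pow_succ', map_add, S.hmon, S.hmon, S.hmon,
      X_mul_monomial, add_sub_cancel_left, coeff_monomial, coeff_monomial]
    split_ifs
    · rfl
    · rw [S.δzero]

theorem degree_t (S : OreData δ ι t φ) (r : R) :
    (φ (t * r) - X * φ r).degree ≤ (φ r).degree := by
  rw [degree_le_iff_coeff_zero]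
  intro m hm
  rw [S.coeff_t, coeff_eq_zero_of_degree_lt hm, S.δzero]

theorem degree_tpow (S : OreData δ ι t φ) (s : R) (hs : s ≠ 0) (i : ℕ) :
    φ (t ^ i * s) - X ^ i * φ s ∈ degreeLT K (i + (φ s).natDegree) := by
  have hd : (φ s).degree = ((φ s).natDegree : ℕ) := degree_eq_natDegree (S.ne_zero hs)
  induction i with
  | zero => simp
  | succ i ih =>
    rw [mem_degreeLT] at ih ⊢
    have h1 : (φ (t ^ i * s)).degree ≤ ((i + (φ s).natDegree : ℕ) : WithBot ℕ) := by
      have : φ (t ^ i * s) = (φ (t ^ i * s) - X ^ i * φ s) + X ^ i * φ s := by ring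
      rw [this]
      refine (degree_add_le _ _).trans (max_le ih.le ?_)
      rw [degree_mul, degree_X_pow, hd]
      push_cast
      exact le_rfl
    have h2 := (S.degree_t (t ^ i * s)).trans h1
    have e : φ (t ^ (i + 1) * s) - X ^ (i + 1) * φ s
        = (φ (t * (t ^ i * s)) - X * φ (t ^ i * s))
          + X * (φ (t ^ i * s) - X ^ i * φ s) := by
      rw [pow_succ' t, mul_assoc]
      ring
    rw [e]
    refine (degree_add_le _ _).trans_lt (max_lt (h2.trans_lt ?_) ?_)
    · exact_mod_cast (by omega)
    · have hX : ∀ q : K[X], ∀ k : ℕ, q.degree < k → (X * q).degree < ((k + 1 : ℕ) : WithBot ℕ) := by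
        intro q k hq
        by_cases h0 : q = 0
        · simp [h0]
        · rw [degree_mul, degree_X, degree_eq_natDegree h0] at *
          have : q.natDegree < k := by exact_mod_cast hq
          exact_mod_cast (by omega)
      have := hX _ _ ih
      convert this using 2
      omega

theorem degree_mul_sub (S : OreData δ ι t φ) (r s : R) (hs : s ≠ 0) :
    φ (r * s) - φ r * φ s ∈ degreeLT K ((φ r).natDegree + (φ s).natDegree) := by
  have e : φ (r * s) - φ r * φ s = ∑ i ∈ (φ r).support,
      C ((φ r).coeff i) * (φ (t ^ i * s) - X ^ i * φ s) := by
    have e1 : φ (r * s) = ∑ i ∈ (φ r).support, φ (ι ((φ r).coeff i) * t ^ i * s) := by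
      rw [← map_sum, ← Finset.sum_mul]
      congr 2
      exact (S.hrepr r).symm
    have e2 : φ r * φ s = ∑ i ∈ (φ r).support, C ((φ r).coeff i) * X ^ i * φ s := by
      rw [← Finset.sum_mul, ← (φ r).as_sum_support_C_mul_X_pow]
    rw [e1, e2, ← Finset.sum_sub_distrib]
    refine Finset.sum_congr rfl fun i _ => ?_
    rw [mul_assoc, S.φιmul]
    ring
  rw [e]
  refine Submodule.sum_mem _ fun i hi => ?_
  rw [← smul_eq_C_mul]
  refine Submodule.smul_mem _ _ ?_
  exact degreeLT_mono (Nat.add_le_add_right (le_natDegree_of_mem_supp i hi) _) (S.degree_tpow s hs i)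

theorem degree_mul (S : OreData δ ι t φ) (r s : R) :
    (φ (r * s)).degree = (φ r).degree + (φ s).degree := by
  by_cases hr : r = 0
  · simp [hr]
  by_cases hs : s = 0
  · simp [hs]
  have h := mem_degreeLT.1 (S.degree_mul_sub r s hs)
  have hd : (φ r * φ s).degree = ((φ r).natDegree + (φ s).natDegree : ℕ) := by
    rw [Polynomial.degree_mul, degree_eq_natDegree (S.ne_zero hr),
      degree_eq_natDegree (S.ne_zero hs)]
    push_cast
    rfl
  rw [← hd] at h
  have e : φ (r * s) = φ r * φ s + (φ (r * s) - φ r * φ s) := by ring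
  rw [e, degree_add_eq_left_of_degree_lt h, Polynomial.degree_mul]

theorem nzd (S : OreData δ ι t φ) {r s : R} (h : r * s = 0) : r = 0 ∨ s = 0 := by
  have := S.degree_mul r s
  rw [h, map_zero, degree_zero] at this
  rcases WithBot.add_eq_bot.1 this.symm with h | h
  · exact Or.inl (S.eq_zero (degree_eq_bot.1 h))
  · exact Or.inr (S.eq_zero (degree_eq_bot.1 h))

theorem isUnit_of_left (S : OreData δ ι t φ) {u a : R} (h : u * a = 1) : IsUnit a := by
  have hn : (1 : R) ≠ 0 := by
    intro h1
    have := S.φone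
    rw [h1, map_zero] at this
    exact zero_ne_one this
  have ha : a ≠ 0 := by
    rintro rfl
    simp at h
    exact hn h.symm
  have h2 : (a * u - 1) * a = 0 := by rw [sub_mul, mul_assoc, h]; simp
  have h3 : a * u = 1 := by
    rcases S.nzd h2 with h | h
    · exact sub_eq_zero.1 h
    · exact absurd h ha
  exact ⟨⟨a, u, h3, h⟩, rfl⟩

theorem isUnit_deg (S : OreData δ ι t φ) {a : R} (h : IsUnit a) : (φ a).degree = 0 := by
  obtain ⟨b, hb⟩ := h.exists_right_inv
  have := S.degree_mul a b
  rw [hb, S.φone, degree_one] at this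
  exact (Nat.WithBot.add_eq_zero_iff.1 this.symm).1

theorem div (S : OreData δ ι t φ) {d : R} (hd : d ≠ 0) (k : ℕ) : ∀ r : R, (φ r).degree < k →
    ∃ q, (φ (r - q * d)).degree < (φ d).degree := by
  induction k with
  | zero =>
    intro r hr
    have : r = 0 := S.eq_zero (by simpa using hr)
    exact ⟨0, by simpa [this] using bot_lt_iff_ne_bot.2 (by simpa using S.ne_zero hd)⟩
  | succ k ih =>
    intro r hr
    by_cases hlt : (φ r).degree < (φ d).degree
    · exact ⟨0, by simpa using hlt⟩
    have hr0 : r ≠ 0 := by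
      rintro rfl
      apply hlt
      simpa using bot_lt_iff_ne_bot.2 (by simpa using S.ne_zero hd)
    have hdd := degree_eq_natDegree (S.ne_zero hd)
    have hrd := degree_eq_natDegree (S.ne_zero hr0)
    have hle : (φ d).natDegree ≤ (φ r).natDegree := natDegree_le_natDegree (not_lt.1 hlt)
    have hlc : (φ d).leadingCoeff ≠ 0 := leadingCoeff_ne_zero.2 (S.ne_zero hd)
    have hlcr : (φ r).leadingCoeff ≠ 0 := leadingCoeff_ne_zero.2 (S.ne_zero hr0)
    set j := (φ r).natDegree - (φ d).natDegree with hj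
    set q := ι ((φ r).leadingCoeff / (φ d).leadingCoeff) * t ^ j with hq
    have hsub := mem_degreeLT.1 (S.degree_tpow d hd j)
    have hjd : j + (φ d).natDegree = (φ r).natDegree := by omega
    rw [hjd, ← hrd] at hsub
    have e : φ (r - q * d) = (φ r - C ((φ r).leadingCoeff / (φ d).leadingCoeff) * X ^ j * φ d)
      - C ((φ r).leadingCoeff / (φ d).leadingCoeff) * (φ (t ^ j * d) - X ^ j * φ d) := by
      rw [map_sub, hq, mul_assoc, S.φιmul]
      ring
    have hlt : (φ (r - q * d)).degree < (φ r).degree := by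
      rw [e]
      refine (degree_sub_le _ _).trans_lt (max_lt ?_ ?_)
      · refine degree_sub_lt_left ?_ (S.ne_zero hr0) ?_
        · rw [Polynomial.degree_mul, degree_C_mul_X_pow _ (div_ne_zero hlcr hlc), hrd, hdd, ← hjd]
          push_cast
          rfl
        · rw [Polynomial.leadingCoeff_mul, leadingCoeff_C_mul_X_pow, div_mul_cancel₀ _ hlc]
      · rwa [degree_C_mul (div_ne_zero hlcr hlc)]
    have hk : (φ (r - q * d)).degree < k := by
      rw [hrd] at hr hlt
      refine hlt.trans_le ?_
      have : (φ r).natDegree < k + 1 := by exact_mod_cast hr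
      exact_mod_cast (by omega)
    obtain ⟨q', hq'⟩ := ih _ hk
    exact ⟨q' + q, by rw [add_mul, add_comm, ← sub_sub]; exact hq'⟩

theorem principal (S : OreData δ ι t φ) (I : Ideal R) {a : R} (ha : a ∈ I) (ha0 : a ≠ 0) :
    ∃ d ∈ I, ∀ r ∈ I, ∃ q, r = q * d := by
  classical
  have hex : ∃ k : ℕ, ∃ d ∈ I, d ≠ 0 ∧ (φ d).natDegree = k := ⟨_, a, ha, ha0, rfl⟩
  obtain ⟨d, hdI, hd0, hdk⟩ := Nat.find_spec hex
  refine ⟨d, hdI, fun r hr => ?_⟩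
  obtain ⟨q, hq⟩ := S.div hd0 ((φ r).natDegree + 1) r
    (degree_le_natDegree.trans_lt (by exact_mod_cast Nat.lt_succ_self _))
  refine ⟨q, ?_⟩
  by_contra hne
  have h0 : r - q * d ≠ 0 := sub_ne_zero.2 hne
  have hmem : r - q * d ∈ I := I.sub_mem hr (I.mul_mem_left _ hdI)
  have := Nat.find_min' hex ⟨_, hmem, h0, rfl⟩
  have h2 := natDegree_lt_natDegree (S.ne_zero h0) hq
  omega

end OreData

/-- Differential polynomial ring with a central element `x` of degree `n`, and the matrix
representation by right multiplication. -/
structure OreRep {K R : Type} [Field K] [Ring R] (δ : K → K) (ι : K →+* R) (t : R)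
    (φ : R →+ Polynomial K) (n : ℕ) (x : R) (P : Polynomial K →+* R)
    (ρ : R → Matrix (Fin n) (Fin n) (Polynomial K)) : Prop extends OreData δ ι t φ where
  hleib : ∀ a b : K, δ (a * b) = a * δ b + δ a * b
  hn : 0 < n
  hxt : Commute t x
  hdx : (φ x).degree = (n : ℕ)
  PC : ∀ a, P (Polynomial.C a) = ι a
  PX : P Polynomial.X = x
  hρ : ∀ (g : R) (i : Fin n), t ^ (i : ℕ) * g = ∑ j : Fin n, P (ρ g i j) * t ^ (j : ℕ)

namespace OreRep
open Polynomial

variable {K R : Type} [Field K] [Ring R] {δ : K → K} {ι : K →+* R} {t : R}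
  {φ : R →+ Polynomial K} {n : ℕ} {x : R} {P : Polynomial K →+* R}
  {ρ : R → Matrix (Fin n) (Fin n) (Polynomial K)}

theorem degree_P (S : OreRep δ ι t φ n x P ρ) (k : ℕ) : ∀ (q : K[X]), q ≠ 0 → q.natDegree = k →
    (φ (P q)).degree = (n * k : ℕ) := by
  induction k with
  | zero =>
    intro q hq hk
    rw [natDegree_eq_zero] at hk
    obtain ⟨a, rfl⟩ := hk
    rw [S.PC, S.φι, degree_C (by simpa using hq)]
    simp
  | succ k ih =>
    intro q hq hk
    have hk' : q.divX.natDegree = k := by rw [natDegree_divX_eq_natDegree_tsub_one, hk]; rfl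
    have h0 : q.divX ≠ 0 := by
      intro h0
      rw [divX_eq_zero_iff] at h0
      rw [h0, natDegree_C] at hk
      omega
    have h1 := ih _ h0 hk'
    have h2 : (φ (P q.divX * x)).degree = ((n * (k + 1) : ℕ)) := by
      rw [S.degree_mul, h1, S.hdx]
      push_cast
      ring
    conv_lhs => rw [← divX_mul_X_add q]
    rw [map_add, map_mul, S.PX, map_add, S.PC, S.φι, degree_add_eq_left_of_degree_lt, h2]
    rw [h2]
    refine degree_C_le.trans_lt ?_
    have := S.hn
    exact_mod_cast (by positivity)

theorem degree_Pt (S : OreRep δ ι t φ n x P ρ) (q : K[X]) (hq : q ≠ 0) (j : ℕ) :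
    (φ (P q * t ^ j)).degree = (n * q.natDegree + j : ℕ) := by
  rw [S.degree_mul, S.degree_P _ q hq rfl, S.φt, degree_X_pow]
  push_cast
  rfl

theorem degree_comb (S : OreRep δ ι t φ n x P ρ) (v : Fin n → K[X]) (j : Fin n)
    (hj : v j ≠ 0) :
    ((n * (v j).natDegree + j : ℕ) : WithBot ℕ) ≤ (φ (∑ j, P (v j) * t ^ (j : ℕ))).degree := by
  rw [map_sum, degree_sum_eq_of_disjoint (fun j : Fin n => φ (P (v j) * t ^ (j : ℕ)))]
  · rw [← S.degree_Pt _ hj]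
    exact Finset.le_sup (f := fun j : Fin n => (φ (P (v j) * t ^ (j : ℕ))).degree)
      (Finset.mem_univ j)
  · intro a ha b hb hab h
    have hz : ∀ a : Fin n, φ (P (v a) * t ^ (a : ℕ)) ≠ 0 → v a ≠ 0 := by
      intro a h h0
      simp [h0] at h
    simp only [Function.comp_apply] at h
    rw [S.degree_Pt _ (hz a ha.2), S.degree_Pt _ (hz b hb.2)] at h
    have h' : n * (v a).natDegree + a = n * (v b).natDegree + b := by exact_mod_cast h
    have h3 := congrArg (· % n) h'
    simp only [Nat.mul_add_mod, Nat.mod_eq_of_lt a.2, Nat.mod_eq_of_lt b.2] at h3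
    exact hab (Fin.ext h3)

theorem comb_inj (S : OreRep δ ι t φ n x P ρ) {v w : Fin n → K[X]}
    (h : ∑ j, P (v j) * t ^ (j : ℕ) = ∑ j, P (w j) * t ^ (j : ℕ)) : v = w := by
  have h0 : ∑ j, P ((v - w) j) * t ^ (j : ℕ) = 0 := by
    simp only [Pi.sub_apply, map_sub, sub_mul, Finset.sum_sub_distrib, h, sub_self]
  funext j
  by_contra hne
  have := S.degree_comb (v - w) j (sub_ne_zero.2 hne)
  rw [h0, map_zero, degree_zero, le_bot_iff] at this
  exact WithBot.coe_ne_bot this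

theorem natDegree_det (S : OreRep δ ι t φ n x P ρ) {f : R} {m : ℕ} (hf : (φ f).degree ≤ (m : ℕ)) :
    (ρ f).det.natDegree ≤ m := by
  have hb : ∀ i j, ρ f i j ≠ 0 → n * (ρ f i j).natDegree + j ≤ i + m := by
    intro i j hij
    have h1 := S.degree_comb (ρ f i) j hij
    rw [← S.hρ, S.degree_mul, S.φt, degree_X_pow] at h1
    have h2 : ((n * (ρ f i j).natDegree + j : ℕ) : WithBot ℕ) ≤ ((i + m : ℕ) : WithBot ℕ) := by
      refine h1.trans ?_
      push_cast
      gcongr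
    exact_mod_cast h2
  rw [Matrix.det_apply]
  refine natDegree_sum_le_of_forall_le _ _ fun σ _ => ?_
  refine (natDegree_smul_le _ _).trans ?_
  by_cases h0 : ∃ i, ρ f (σ i) i = 0
  · obtain ⟨i, hi⟩ := h0
    have hz : ∏ i, ρ f (σ i) i = 0 := Finset.prod_eq_zero (Finset.mem_univ i) hi
    rw [hz]
    simp
  push Not at h0
  refine (natDegree_prod_le _ _).trans ?_
  refine Nat.le_of_mul_le_mul_left ?_ S.hn
  have h1 : ∑ i, (n * (ρ f (σ i) i).natDegree + (i : ℕ)) ≤ ∑ i, ((σ i : ℕ) + m) :=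
    Finset.sum_le_sum fun i _ => hb _ _ (h0 i)
  rw [Finset.sum_add_distrib, Finset.sum_add_distrib, ← Finset.mul_sum,
    Equiv.sum_comp σ (fun i : Fin n => (i : ℕ))] at h1
  simp only [Finset.sum_const, Finset.card_univ, Fintype.card_fin, smul_eq_mul] at h1
  have h2 : n * ∑ i, (ρ f (σ i) i).natDegree ≤ n * m := by omega
  exact h2

theorem ρ_mul (S : OreRep δ ι t φ n x P ρ) (g h : R) : ρ (g * h) = ρ g * ρ h := by
  funext i
  apply S.comb_inj
  rw [← S.hρ, ← mul_assoc, S.hρ, Finset.sum_mul]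
  simp only [Matrix.mul_apply, map_sum, Finset.sum_mul, map_mul, mul_assoc, S.hρ h, Finset.mul_sum]
  rw [Finset.sum_comm]

theorem ρ_central (S : OreRep δ ι t φ n x P ρ) (q : K[X]) (hq : Commute t (P q)) :
    ρ (P q) = Matrix.scalar (Fin n) q := by
  funext i
  apply S.comb_inj
  rw [← S.hρ, (hq.pow_left _).eq]
  rw [Finset.sum_eq_single i]
  · simp
  · intro b _ hb
    simp [Matrix.diagonal_apply_ne' _ hb]
  · simp

theorem det_central (S : OreRep δ ι t φ n x P ρ) (q : K[X]) (hq : Commute t (P q)) :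
    (ρ (P q)).det = q ^ n := by
  rw [S.ρ_central q hq]
  simp

theorem isUnit_of_det (S : OreRep δ ι t φ n x P ρ) {f : R} (h : IsUnit (ρ f).det) : IsUnit f := by
  have h1 : (ρ f)⁻¹ * ρ f = 1 := Matrix.nonsing_inv_mul _ h
  let z : Fin n := ⟨0, S.hn⟩
  apply S.isUnit_of_left (u := ∑ j, P ((ρ f)⁻¹ z j) * t ^ (j : ℕ))
  rw [Finset.sum_mul]
  simp only [mul_assoc, S.hρ f, Finset.mul_sum]
  rw [Finset.sum_comm]
  simp only [← mul_assoc, ← map_mul, ← Finset.sum_mul, ← map_sum, ← Matrix.mul_apply, h1]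
  rw [Finset.sum_eq_single z]
  · simp [z]
  · intro b _ hb
    simp [Matrix.one_apply_ne' hb]
  · simp

/-- The coefficientwise derivation as a ring homomorphism to the dual numbers. -/
noncomputable def E0 (S : OreRep δ ι t φ n x P ρ) : K →+* DualNumber K[X] where
  toFun a := TrivSqZeroExt.inl (C a) + TrivSqZeroExt.inr (C (δ a))
  map_one' := by
    have h : δ 1 = 0 := by simpa using S.hleib 1 1
    simp [h]
  map_zero' := by
    have h : δ 0 = 0 := S.δzero
    simp [h]
  map_add' a b := by
    refine TrivSqZeroExt.ext ?_ ?_ <;> simp [S.hδ]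
  map_mul' a b := by
    refine TrivSqZeroExt.ext ?_ ?_
    · simp
    · simp [S.hleib]

noncomputable def E (S : OreRep δ ι t φ n x P ρ) : K[X] →+* DualNumber K[X] :=
  eval₂RingHom S.E0 (TrivSqZeroExt.inl X)

theorem E_monomial (S : OreRep δ ι t φ n x P ρ) (k : ℕ) (a : K) :
    S.E (monomial k a) = TrivSqZeroExt.inl (monomial k a) + TrivSqZeroExt.inr (monomial k (δ a)) := by
  have h : (TrivSqZeroExt.inl X : DualNumber K[X]) ^ k = TrivSqZeroExt.inl (X ^ k) :=
    (map_pow (TrivSqZeroExt.inlHom K[X] K[X]) X k).symm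
  have h0 : S.E0 a = TrivSqZeroExt.inl (C a) + TrivSqZeroExt.inr (C (δ a)) := rfl
  rw [E, coe_eval₂RingHom, eval₂_monomial, h, h0]
  refine TrivSqZeroExt.ext ?_ ?_
  · simp [C_mul_X_pow_eq_monomial]
  · simp [C_mul_X_pow_eq_monomial]

theorem fst_E (S : OreRep δ ι t φ n x P ρ) (q : K[X]) : (S.E q).fst = q := by
  induction q using Polynomial.induction_on' with
  | add p q hp hq => rw [map_add, TrivSqZeroExt.fst_add, hp, hq]
  | monomial k a => rw [S.E_monomial]; simp

theorem coeff_snd_E (S : OreRep δ ι t φ n x P ρ) (q : K[X]) (i : ℕ) :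
    (S.E q).snd.coeff i = δ (q.coeff i) := by
  induction q using Polynomial.induction_on' with
  | add p q hp hq => rw [map_add, TrivSqZeroExt.snd_add, coeff_add, coeff_add, hp, hq, S.hδ]
  | monomial k a =>
    rw [S.E_monomial, TrivSqZeroExt.snd_add, TrivSqZeroExt.snd_inl, TrivSqZeroExt.snd_inr, zero_add,
      coeff_monomial, coeff_monomial]
    split_ifs
    · rfl
    · rw [S.δzero]

theorem P_monomial (S : OreRep δ ι t φ n x P ρ) (k : ℕ) (a : K) :
    P (monomial k a) = ι a * x ^ k := by
  rw [← C_mul_X_pow_eq_monomial, map_mul, map_pow, S.PC, S.PX]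

theorem t_P (S : OreRep δ ι t φ n x P ρ) (q : K[X]) :
    t * P q = P q * t + P (S.E q).snd := by
  induction q using Polynomial.induction_on' with
  | add p q hp hq =>
    rw [map_add, map_add, TrivSqZeroExt.snd_add, map_add, mul_add, hp, hq, add_mul]
    abel
  | monomial k a =>
    rw [S.E_monomial, TrivSqZeroExt.snd_add, TrivSqZeroExt.snd_inl, TrivSqZeroExt.snd_inr, zero_add,
      S.P_monomial, S.P_monomial, ← mul_assoc, S.hmul, add_mul, mul_assoc, mul_assoc,
      (S.hxt.pow_right k).eq]

theorem commutator (S : OreRep δ ι t φ n x P ρ) (f : R) :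
    (ρ f).map (fun q => (S.E q).snd) = ρ t * ρ f - ρ f * ρ t := by
  rw [eq_sub_iff_add_eq, ← S.ρ_mul t f]
  funext i
  apply S.comb_inj
  symm
  rw [← S.hρ, ← mul_assoc, ← pow_succ, pow_succ', mul_assoc, S.hρ f, Finset.mul_sum]
  simp only [← mul_assoc, S.t_P, add_mul]
  simp only [Matrix.add_apply, Matrix.map_apply, map_add, add_mul, Finset.sum_add_distrib]
  rw [add_comm]
  congr 1
  simp only [Matrix.mul_apply, map_sum, map_mul, Finset.sum_mul]
  rw [Finset.sum_comm]
  refine Finset.sum_congr rfl fun j _ => ?_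
  have := S.hρ t j
  rw [← pow_succ, pow_succ'] at this
  rw [mul_assoc, this, Finset.mul_sum]
  simp only [mul_assoc]

theorem E_det (S : OreRep δ ι t φ n x P ρ) (f : R) :
    S.E (ρ f).det = TrivSqZeroExt.inl (ρ f).det := by
  let il : K[X] →+* DualNumber K[X] := TrivSqZeroExt.inlHom K[X] K[X]
  let ep : DualNumber K[X] := DualNumber.eps
  let M := il.mapMatrix (ρ f)
  let B := il.mapMatrix (ρ t)
  have hee : ep * ep = 0 := DualNumber.eps_mul_eps
  have h1 : S.E.mapMatrix (ρ f) = (1 + ep • B) * M * (1 - ep • B) := by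
    have h2 : S.E.mapMatrix (ρ f) = M + ep • (B * M - M * B) := by
      have h3 : B * M - M * B = il.mapMatrix (ρ t * ρ f - ρ f * ρ t) := by
        rw [map_sub, map_mul, map_mul]
      rw [h3, ← S.commutator]
      ext i j
      · simp [M, il, ep, S.fst_E]
      · simp [M, il, ep]
    rw [h2]
    simp only [add_mul, mul_sub, one_mul, mul_one, Matrix.smul_mul, Matrix.mul_smul, smul_sub,
      smul_smul, hee, zero_smul]
    simp only [add_zero]
    abel
  have h4 : (1 + ep • B).det * (1 - ep • B).det = 1 := by
    rw [← Matrix.det_mul]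
    simp only [add_mul, mul_sub, one_mul, mul_one, Matrix.smul_mul, Matrix.mul_smul,
      smul_smul, hee, zero_smul]
    simp
  rw [RingHom.map_det, h1, Matrix.det_mul, Matrix.det_mul, mul_right_comm, h4, one_mul]
  exact (RingHom.map_det il (ρ f)).symm

theorem δ_det (S : OreRep δ ι t φ n x P ρ) (f : R) (i : ℕ) : δ ((ρ f).det.coeff i) = 0 := by
  rw [← S.coeff_snd_E, S.E_det]
  simp

end OreRep

namespace OreRep
open Polynomial

variable {K R : Type} [Field K] [Ring R] {δ : K → K} {ι : K →+* R} {t : R}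
  {φ : R →+ Polynomial K} {n : ℕ} {x : R} {P : Polynomial K →+* R}
  {ρ : R → Matrix (Fin n) (Fin n) (Polynomial K)}

theorem lift_det {F : Type} [Field F] [Algebra F K] (S : OreRep δ ι t φ n x P ρ)
    (hconst : ∀ x : K, δ x = 0 ↔ x ∈ (algebraMap F K).range) (f : R) :
    ∃ q : F[X], q.map (algebraMap F K) = (ρ f).det := by
  have : (ρ f).det ∈ lifts (algebraMap F K) := by
    rw [lifts_iff_coeff_lifts]
    intro i
    exact (hconst _).1 (S.δ_det f i)
  exact (mem_lifts _).1 this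

theorem P_central {F : Type} [Field F] [Algebra F K] (S : OreRep δ ι t φ n x P ρ)
    (hconst : ∀ x : K, δ x = 0 ↔ x ∈ (algebraMap F K).range) (c : F[X]) (r : R) :
    Commute (P (c.map (algebraMap F K))) r := by
  have ht : Commute (P (c.map (algebraMap F K))) t := by
    have h0 : (S.E (c.map (algebraMap F K))).snd = 0 := by
      ext i
      rw [S.coeff_snd_E, coeff_zero, hconst, coeff_map]
      exact ⟨_, rfl⟩
    have := S.t_P (c.map (algebraMap F K))
    rw [h0, map_zero, add_zero] at this
    exact this.symm
  refine S.ind (P := fun r => Commute (P (c.map (algebraMap F K))) r) (Commute.zero_right _)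
    (fun r s hr hs => hr.add_right hs) (fun a i => ?_) r
  refine Commute.mul_right ?_ (ht.pow_right i)
  rw [← S.PC]
  exact (Commute.all _ _).map P

theorem assoc_norm {F : Type} [Field F] [Algebra F K] (S : OreRep δ ι t φ n x P ρ)
    (hconst : ∀ x : K, δ x = 0 ↔ x ∈ (algebraMap F K).range)
    (f : R) (m : ℕ) (hdeg : (φ f).degree = (m : ℕ)) (hhat : F[X]) (hm : hhat.natDegree = m)
    (hleft : ∃ g : R, P (hhat.map (algebraMap F K)) = g * f) (hirr : Irreducible hhat)
    (q : F[X]) (hq : q.map (algebraMap F K) = (ρ f).det) : Associated q hhat := by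
  obtain ⟨g, hg⟩ := hleft
  obtain ⟨q', hq'⟩ := S.lift_det hconst g
  have h1 : hhat ^ n = q' * q := by
    apply map_injective (algebraMap F K) (algebraMap F K).injective
    rw [Polynomial.map_mul, hq, hq', ← Matrix.det_mul, ← S.ρ_mul, ← hg,
      S.det_central _ (S.P_central hconst _ _).symm, Polynomial.map_pow]
  have hpos : 0 < m := hm ▸ hirr.natDegree_pos
  obtain ⟨k, _, hk⟩ := (dvd_prime_pow hirr.prime n).1 ⟨q', by rw [h1, mul_comm]⟩
  have hqd : q.natDegree ≤ m := by
    have := S.natDegree_det hdeg.le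
    rwa [← hq, natDegree_map] at this
  have hkd : q.natDegree = k * m := by
    rw [natDegree_eq_of_degree_eq (degree_eq_degree_of_associated hk), natDegree_pow, hm]
  have hk1 : k ≤ 1 := by
    by_contra hlt
    have : 2 * m ≤ k * m := Nat.mul_le_mul_right _ (by omega)
    omega
  interval_cases k
  · exfalso
    rw [pow_zero, associated_one_iff_isUnit] at hk
    have hu : IsUnit (ρ f).det := by
      rw [← hq]
      exact hk.map (mapRingHom (algebraMap F K))
    have h2 := S.isUnit_deg (S.isUnit_of_det hu)
    rw [hdeg] at h2
    have : m = 0 := by exact_mod_cast h2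
    omega
  · simpa using hk

theorem irr_of_irr {F : Type} [Field F] [Algebra F K] (S : OreRep δ ι t φ n x P ρ)
    (hconst : ∀ x : K, δ x = 0 ↔ x ∈ (algebraMap F K).range)
    (f : R) (m : ℕ) (hdeg : (φ f).degree = (m : ℕ)) (hhat : F[X]) (hm : hhat.natDegree = m)
    (hleft : ∃ g : R, P (hhat.map (algebraMap F K)) = g * f) (hirr : Irreducible hhat) :
    Irreducible f := by
  obtain ⟨q, hq⟩ := S.lift_det hconst f
  have hqi := (S.assoc_norm hconst f m hdeg hhat hm hleft hirr q hq).irreducible_iff.2 hirr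
  refine ⟨?_, ?_⟩
  · intro hu
    have h2 := S.isUnit_deg hu
    rw [hdeg] at h2
    have : m = 0 := by exact_mod_cast h2
    have := hirr.natDegree_pos
    omega
  · intro a b hab
    obtain ⟨qa, ha⟩ := S.lift_det hconst a
    obtain ⟨qb, hb⟩ := S.lift_det hconst b
    have h1 : q = qa * qb := by
      apply map_injective (algebraMap F K) (algebraMap F K).injective
      rw [Polynomial.map_mul, hq, ha, hb, ← Matrix.det_mul, ← S.ρ_mul, hab]
    rcases hqi.isUnit_or_isUnit h1 with h | h
    · left
      apply S.isUnit_of_det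
      rw [← ha]
      exact h.map (mapRingHom (algebraMap F K))
    · right
      apply S.isUnit_of_det
      rw [← hb]
      exact h.map (mapRingHom (algebraMap F K))

theorem hhat_irr {F : Type} [Field F] [Algebra F K] (S : OreRep δ ι t φ n x P ρ)
    (hconst : ∀ x : K, δ x = 0 ↔ x ∈ (algebraMap F K).range)
    (f : R) (m : ℕ) (hdeg : (φ f).degree = (m : ℕ)) (hhat : F[X]) (hm : hhat.natDegree = m)
    (hmonic : hhat.Monic)
    (hleft : ∃ g : R, P (hhat.map (algebraMap F K)) = g * f)
    (hmin : ∀ c : F[X], c ≠ 0 → (∃ g : R, P (c.map (algebraMap F K)) = g * f) →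
      hhat.natDegree ≤ c.natDegree) (hirr : Irreducible f) : Irreducible hhat := by
  have hf0 : f ≠ 0 := by
    rintro rfl
    rw [map_zero, degree_zero] at hdeg
    exact WithBot.bot_ne_coe hdeg
  rw [hmonic.irreducible_iff_natDegree]
  refine ⟨?_, ?_⟩
  · rintro h1
    rw [h1, Polynomial.map_one, map_one] at hleft
    obtain ⟨g, hg⟩ := hleft
    exact hirr.not_isUnit (S.isUnit_of_left hg.symm)
  · intro a b ha hb hab
    by_contra! hcon
    obtain ⟨ha0, hb0⟩ := hcon
    have hnd : a.natDegree + b.natDegree = hhat.natDegree := by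
      rw [← hab, natDegree_mul ha.ne_zero hb.ne_zero]
    let A := P (a.map (algebraMap F K))
    let I : Ideal R := Ideal.span {A, f}
    obtain ⟨d, hdI, hd⟩ := S.principal I (a := f) (Ideal.subset_span (by simp)) hf0
    obtain ⟨u, hu⟩ := hd f (Ideal.subset_span (by simp))
    obtain ⟨w, hw⟩ := hd A (Ideal.subset_span (by simp))
    rcases hirr.isUnit_or_isUnit hu with h | h
    · -- `a` itself is a left multiple of `f`
      obtain ⟨v, hv⟩ := h.exists_left_inv
      have hdf : d = v * f := by rw [hu, ← mul_assoc, hv, one_mul]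
      have := hmin a ha.ne_zero ⟨w * v, by rw [mul_assoc, ← hdf]; exact hw⟩
      omega
    · -- `1` is a combination of `a` and `f`, so `b` is a left multiple of `f`
      obtain ⟨v, hv⟩ := h.exists_left_inv
      obtain ⟨r, s, hrs⟩ := Ideal.mem_span_pair.1 hdI
      obtain ⟨g, hg⟩ := hleft
      rw [← hab, Polynomial.map_mul, map_mul] at hg
      have hbf := S.P_central hconst b f
      have := hmin b hb.ne_zero ⟨v * (r * g + s * P (b.map (algebraMap F K))), ?_⟩
      · omega
      · calc P (b.map (algebraMap F K)) = v * d * P (b.map (algebraMap F K)) := by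
              rw [hv, one_mul]
          _ = v * (r * (A * P (b.map (algebraMap F K))) + s * (f * P (b.map (algebraMap F K)))) := by
              rw [← hrs]
              noncomm_ring
          _ = _ := by
              rw [hg, ← hbf.eq]
              noncomm_ring

end OreRep

theorem ore_ad_pow (p : ℕ) [Fact p.Prime] {K R : Type} [Field K] [Ring R] [CharP R p]
    (δ : K → K) (ι : K →+* R) (t : R) (hmul : ∀ a : K, t * ι a = ι a * t + ι (δ a))
    (j : ℕ) (a : K) : t ^ p ^ j * ι a = ι a * t ^ p ^ j + ι (δ^[p ^ j] a) := by
  have : CharP (Module.End ℤ R) p := by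
    refine charP_of_injective_ringHom (f := (Module.toModuleEnd ℤ (S := R) R)) ?_ p
    intro r s h
    have := LinearMap.congr_fun h 1
    simpa using this
  have hc := LinearMap.commute_mulLeft_right (R := ℤ) t t
  have h1 := sub_pow_char_pow_of_commute p j hc
  rw [LinearMap.pow_mulLeft, LinearMap.pow_mulRight] at h1
  have h2 : ∀ k : ℕ, ((LinearMap.mulLeft ℤ t - LinearMap.mulRight ℤ t) ^ k) (ι a)
      = ι (δ^[k] a) := by
    intro k
    induction k with
    | zero => simp
    | succ k ih =>
      rw [pow_succ', Module.End.mul_apply, ih, Function.iterate_succ_apply']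
      simp [hmul]
  have h3 := h2 (p ^ j)
  rw [h1] at h3
  simp at h3
  rw [← h3]
  abel

/-- In `R = K[t;δ]`: if `f` has degree `m` and its minimal central left multiple
`ĥ ∈ F[x]` has degree `m`, then: if `ĥ` is irreducible in `F[x]` then `f` is
irreducible in `R`; conversely if `f` is irreducible then `N(f)` is irreducible
in `F[x]`. -/
theorem differential_irreducibility_criterion
    (p : ℕ) [Fact p.Prime] (F K : Type) [Field F] [Field K] [Algebra F K]
    [CharP F p]
    (hinsep : ∀ x : K, x ^ p ∈ (algebraMap F K).range)
    (e : ℕ) (hdim : Module.finrank F K = p ^ e)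
    (δ : K → K)
    (hadd : ∀ a b : K, δ (a + b) = δ a + δ b)
    (hleibniz : ∀ a b : K, δ (a * b) = a * δ b + δ a * b)
    (hconst : ∀ x : K, δ x = 0 ↔ x ∈ (algebraMap F K).range)
    (c : ℕ → F)
    (hg : ∀ x : K, δ^[p ^ e] x
      + ∑ i ∈ Finset.range e, algebraMap F K (c i) * δ^[p ^ (e - 1 - i)] x = 0)
    (R : Type) [Ring R] (ι : K →+* R) (t : R)
    (hmul : ∀ a : K, t * ι a = ι a * t + ι (δ a))
    (coeff : R →+ (ℕ →₀ K))
    (hcoeff : ∀ (a : K) (i : ℕ), coeff (ι a * t ^ i) = Finsupp.single i a)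
    (hrepr : ∀ x : R, (coeff x).sum (fun i a => ι a * t ^ i) = x)
    (xR : R) (hxR : xR = t ^ (p ^ e)
      + ∑ i ∈ Finset.range e, ι (algebraMap F K (c i)) * t ^ (p ^ (e - 1 - i)))
    (ρ : R → Matrix (Fin (p ^ e)) (Fin (p ^ e)) (Polynomial K))
    (hρ : ∀ (g : R) (i : Fin (p ^ e)), t ^ (i : ℕ) * g =
      ∑ j : Fin (p ^ e), ((ρ g i j).sum fun k a => ι a * xR ^ k) * t ^ (j : ℕ))
    (N : R → Polynomial K) (hN : ∀ g : R, N g = (ρ g).det)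
    (f : R) (m : ℕ) (hdeg : coeff f m ≠ 0 ∧ ∀ i : ℕ, m < i → coeff f i = 0)
    -- ĥ ∈ F[x] monic with h = ĥ(g(t)) the minimal central left multiple of f:
    (hhat : Polynomial F) (hmonic : hhat.Monic)
    (hleft : ∃ g : R, (hhat.sum fun k a => ι (algebraMap F K a) * xR ^ k) = g * f)
    (hcentral : (hhat.sum fun k a => ι (algebraMap F K a) * xR ^ k) ∈ Subring.center R)
    (hminimal : ∀ cc : R, cc ∈ Subring.center R → cc ≠ 0 → (∃ g : R, cc = g * f) →
      (coeff (hhat.sum fun k a => ι (algebraMap F K a) * xR ^ k)).support.sup id ≤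
        (coeff cc).support.sup id)
    (hdeghat : hhat.natDegree = m) :
    (Irreducible hhat → Irreducible f) ∧
    (Irreducible f →
      ∃ q : Polynomial F, q.map (algebraMap F K) = N f ∧ Irreducible q) := by
  classical
  -- left coefficients as polynomials
  let φ : R →+ Polynomial K :=
    (Finsupp.liftAddHom fun i => (Polynomial.monomial i).toAddMonoidHom).comp coeff
  have hφ : ∀ r, φ r = (coeff r).sum fun i a => Polynomial.monomial i a := fun r => rfl
  have hφc : ∀ r i, (φ r).coeff i = coeff r i := by
    intro r i
    rw [hφ, Finsupp.sum, Polynomial.finsetSum_coeff]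
    simp only [Polynomial.coeff_monomial]
    rw [Finset.sum_ite_eq']
    split_ifs with h
    · rfl
    · exact (Finsupp.notMem_support_iff.1 h).symm
  have hsupp : ∀ r, (coeff r).support = (φ r).support := by
    intro r
    ext i
    rw [Finsupp.mem_support_iff, Polynomial.mem_support_iff, hφc]
  have hsup : ∀ r, (coeff r).support.sup id = (φ r).natDegree := by
    intro r
    rw [hsupp]
    apply le_antisymm
    · exact Finset.sup_le fun i hi => Polynomial.le_natDegree_of_mem_supp i hi
    · by_cases h0 : φ r = 0
      · simp [h0]
      · exact Finset.le_sup (f := id) (Polynomial.natDegree_mem_support_of_nonzero h0)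
  have S0 : OreData δ ι t φ :=
    { hδ := hadd
      hmul := hmul
      hmon := by
        intro a i
        rw [hφ, hcoeff, Finsupp.sum_single_index]
        simp
      hrepr := by
        intro r
        conv_rhs => rw [← hrepr r]
        rw [Polynomial.sum, Finsupp.sum, hsupp]
        simp only [hφc] }
  have hιinj : Function.Injective ι := by
    intro a b h
    have := congrArg φ h
    rwa [S0.φι, S0.φι, Polynomial.C_inj] at this
  have hKp : CharP K p := charP_of_injective_ringHom (algebraMap F K).injective p
  have hRp : CharP R p := charP_of_injective_ringHom hιinj p
  have hδF : ∀ a : F, δ (algebraMap F K a) = 0 := fun a => (hconst _).2 ⟨a, rfl⟩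
  have hιF : ∀ a : F, Commute t (ι (algebraMap F K a)) := by
    intro a
    have := hmul (algebraMap F K a)
    rw [hδF, map_zero, add_zero] at this
    exact this
  have hxt : Commute t xR := by
    rw [hxR]
    refine ((Commute.refl t).pow_right _).add_right (Commute.sum_right _ _ _ fun i _ => ?_)
    exact (hιF _).mul_right ((Commute.refl t).pow_right _)
  have hxι : ∀ a, Commute (ι a) xR := by
    intro a
    have had := fun j => ore_ad_pow p δ ι t hmul j a
    have h0 := congrArg ι (hg a)
    rw [map_add, map_zero, map_sum] at h0
    simp only [map_mul] at h0
    have h1 : xR * ι a = ι a * xR := by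
      rw [hxR, add_mul, had, mul_add, Finset.sum_mul, Finset.mul_sum]
      have h2 : ∀ i ∈ Finset.range e,
          ι (algebraMap F K (c i)) * t ^ p ^ (e - 1 - i) * ι a
          = ι a * (ι (algebraMap F K (c i)) * t ^ p ^ (e - 1 - i))
            + ι (algebraMap F K (c i)) * ι (δ^[p ^ (e - 1 - i)] a) := by
        intro i _
        rw [mul_assoc, had, mul_add, ← mul_assoc, ← mul_assoc, ← map_mul, ← map_mul,
          mul_comm (algebraMap F K (c i)) a, map_mul ι a]
      rw [Finset.sum_congr rfl h2, Finset.sum_add_distrib]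
      rw [add_eq_zero_iff_eq_neg] at h0
      rw [h0]
      abel
    exact h1.symm
  have hp : 1 < p := (Fact.out : p.Prime).one_lt
  have hdx : (φ xR).degree = (p ^ e : ℕ) := by
    rw [hxR, map_add, S0.φt, Polynomial.degree_add_eq_left_of_degree_lt,
      Polynomial.degree_X_pow]
    rw [Polynomial.degree_X_pow, map_sum, ← Polynomial.mem_degreeLT]
    refine Submodule.sum_mem _ fun i hi => ?_
    rw [S0.hmon, Polynomial.mem_degreeLT]
    refine (Polynomial.degree_monomial_le _ _).trans_lt ?_
    rw [Finset.mem_range] at hi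
    have : p ^ (e - 1 - i) < p ^ e := Nat.pow_lt_pow_right hp (by omega)
    exact_mod_cast this
  let P : Polynomial K →+* R := Polynomial.eval₂RingHom' ι xR hxι
  have hP : ∀ q : Polynomial K, P q = q.sum fun k a => ι a * xR ^ k := by
    intro q
    change Polynomial.eval₂ ι xR q = _
    rw [Polynomial.eval₂_eq_sum]
  have S : OreRep δ ι t φ (p ^ e) xR P ρ :=
    { S0 with
      hleib := hleibniz
      hn := pow_pos (by omega) _
      hxt := hxt
      hdx := hdx
      PC := fun a => Polynomial.eval₂_C ι xR
      PX := Polynomial.eval₂_X ι xR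
      hρ := by
        intro g i
        simp only [hP]
        exact hρ g i }
  have hPF : ∀ q : Polynomial F, P (q.map (algebraMap F K))
      = q.sum fun k a => ι (algebraMap F K a) * xR ^ k := by
    intro q
    change Polynomial.eval₂ ι xR _ = _
    rw [Polynomial.eval₂_map, Polynomial.eval₂_eq_sum]
    rfl
  have hdegf : (φ f).degree = (m : ℕ) := by
    apply le_antisymm
    · rw [Polynomial.degree_le_iff_coeff_zero]
      intro i hi
      rw [hφc]
      exact hdeg.2 i (by exact_mod_cast hi)
    · apply Polynomial.le_degree_of_ne_zero
      rw [hφc]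
      exact hdeg.1
  rw [← hPF] at hleft hminimal
  have hndP : ∀ q : Polynomial F, q ≠ 0 →
      (φ (P (q.map (algebraMap F K)))).degree = (p ^ e * q.natDegree : ℕ) := by
    intro q hq
    exact S.degree_P _ _ ((Polynomial.map_ne_zero_iff (algebraMap F K).injective).2 hq)
      (Polynomial.natDegree_map _)
  have hmin : ∀ c : Polynomial F, c ≠ 0 →
      (∃ g : R, P (c.map (algebraMap F K)) = g * f) → hhat.natDegree ≤ c.natDegree := by
    intro c hc hcf
    have h1 := hminimal (P (c.map (algebraMap F K)))
      (Subring.mem_center_iff.2 fun r => (S.P_central hconst c r).symm.eq) ?_ hcf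
    · rw [hsup, hsup, Polynomial.natDegree_eq_of_degree_eq_some (hndP _ hmonic.ne_zero),
        Polynomial.natDegree_eq_of_degree_eq_some (hndP _ hc)] at h1
      exact Nat.le_of_mul_le_mul_left h1 S.hn
    · intro h0
      have := hndP c hc
      rw [h0, map_zero, Polynomial.degree_zero] at this
      exact WithBot.bot_ne_coe this
  refine ⟨S.irr_of_irr hconst f m hdegf hhat hdeghat hleft, fun hirr => ?_⟩
  have hh := S.hhat_irr hconst f m hdegf hhat hdeghat hmonic hleft hmin hirr
  obtain ⟨q, hq⟩ := S.lift_det hconst f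
  exact ⟨q, by rw [hN, hq],
    (S.assoc_norm hconst f m hdegf hhat hdeghat hleft hh q hq).irreducible_iff.2 hh⟩
end
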